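/- arXiv:2604.10310 — 4 statements merged into one kernel-verified Lean document; each statement's English description precedes it below -/
import Mathlib

section
/- Let ν be a Borel probability measure on ℝ with finite moments of all orders satisfying Carleman's condition Σ_{m≥1} (∫ |t|^{2m} dν(t))^{-1/(2m)} = ∞. Then ν is uniquely determined by its moments: any Borel probability measure on ℝ with the same moments of all orders equals ν. -/
open MeasureTheory Filter
open scoped InnerProductSpace ENNReal Topology BigOperators

/-- Weak convergence of a sequence of measures: convergence of integrals of all
bounded continuous functions. -/
def WeakTendsto {E : Type*} [MeasurableSpace E] [TopologicalSpace E]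
    (μ : ℕ → Measure E) (ν : Measure E) : Prop :=
  ∀ f : BoundedContinuousFunction E ℝ,
    Tendsto (fun n => ∫ x, f x ∂(μ n)) atTop (𝓝 (∫ x, f x ∂ν))

/-- Carleman's condition for a measure on ℝ: the series of reciprocal (2m)-th
roots of the even absolute moments diverges. -/
def Carleman (ν : Measure ℝ) : Prop :=
  ¬ Summable (fun m : ℕ =>
    (∫ t, |t| ^ (2 * (m + 1)) ∂ν) ^ (-(1 / (2 * (m + 1) : ℝ))))

/-!
If `μ` and `ν` have the same moments, the difference `f` of their characteristic functions is
smooth and vanishes to infinite order at `0`, and `|f⁽ᵏ⁾|` is bounded by the `k`-th absolute moment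
`M k` of `μ + ν`, a log-convex sequence. Bang's argument shows that such an `f` is zero when
`∑ M n / M (n + 1)` diverges: the estimates `|f⁽ᵏ⁾| ≤ e ^ (k - p) * M k` hold for every `p` at `0`,
and moving by `M p / (e * M (p + 1))` loses only one unit of `p`, so they hold for every `p` at
every point. Carleman's inequality `∑ (a₀ ⋯ aₙ) ^ (1 / (n + 1)) ≤ 2 e ∑ aₙ`, applied to
`aₙ = M n / M (n + 1)`, whose products telescope, derives the divergence of these ratios from
Carleman's condition.
-/

open scoped ContDiff Nat

/-! ### Carleman's inequality -/

section CarlemanInequality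

variable {a : ℕ → ℝ}

lemma div_exp_one_pow_le_factorial (n : ℕ) : (n / Real.exp 1) ^ n ≤ n ! := by
  have hexp : (n : ℝ) ^ n / n ! ≤ Real.exp n := Real.pow_div_factorial_le_exp _ n.cast_nonneg n
  rw [div_pow, ← Real.exp_nat_mul, mul_one, div_le_iff₀ (Real.exp_pos _), mul_comm]
  exact (div_le_iff₀ (by positivity)).1 hexp

/- AM-GM is applied to `(j + 1) * a j`, not `a j`: the weights gain the factor
`((n + 1)!) ^ (1 / (n + 1)) ≥ (n + 1) / e`, which makes the sum over `n` converge. -/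
lemma prod_range_rpow_inv_le (ha : ∀ j, 0 ≤ a j) (n : ℕ) :
    (∏ j ∈ Finset.range (n + 1), a j) ^ ((n : ℝ) + 1)⁻¹ ≤
      Real.exp 1 * ((((n : ℝ) + 1) ^ 2)⁻¹ * ∑ j ∈ Finset.range (n + 1), (j + 1) * a j) := by
  have hprod : 0 ≤ ∏ j ∈ Finset.range (n + 1), a j := Finset.prod_nonneg fun j _ => ha j
  have hfactorial : ∏ j ∈ Finset.range (n + 1), ((j : ℝ) + 1) = (n + 1)! := by
    exact_mod_cast Finset.prod_range_add_one_eq_factorial (n + 1)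
  have amgm : ((n + 1)! : ℝ) ^ ((n : ℝ) + 1)⁻¹ *
      (∏ j ∈ Finset.range (n + 1), a j) ^ ((n : ℝ) + 1)⁻¹ ≤
        (∑ j ∈ Finset.range (n + 1), (j + 1) * a j) / (n + 1) := by
    have h := Real.geom_mean_le_arith_mean (Finset.range (n + 1)) (fun _ => 1)
      (fun j => (j + 1) * a j) (fun _ _ => zero_le_one) (by simp [Nat.cast_add_one_pos])
      (fun j _ => mul_nonneg (by positivity) (ha j))
    simpa [Finset.prod_mul_distrib, hfactorial, Real.mul_rpow, hprod] using h
  have stirling : ((n : ℝ) + 1) / Real.exp 1 ≤ ((n + 1)! : ℝ) ^ ((n : ℝ) + 1)⁻¹ := by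
    have h := div_exp_one_pow_le_factorial (n + 1)
    push_cast at h
    rw [Real.le_rpow_inv_iff_of_pos (by positivity) (by positivity) (by positivity)]
    exact_mod_cast h
  have hmean := (mul_le_mul_of_nonneg_right stirling (Real.rpow_nonneg hprod _)).trans amgm
  rw [div_mul_eq_mul_div, div_le_div_iff₀ (Real.exp_pos 1) (by positivity)] at hmean
  rw [inv_mul_eq_div, mul_div_assoc', le_div_iff₀ (by positivity)]
  linarith

lemma sum_Ico_inv_add_one_sq_le (j N : ℕ) :
    ∑ n ∈ Finset.Ico j N, (((n : ℝ) + 1) ^ 2)⁻¹ ≤ 2 / ((j : ℝ) + 1) := by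
  calc ∑ n ∈ Finset.Ico j N, (((n : ℝ) + 1) ^ 2)⁻¹
      = ∑ i ∈ Finset.Ioo j (N + 1), ((i : ℝ) ^ 2)⁻¹ := by
        rw [← Finset.Ico_add_one_left_eq_Ioo, ← Finset.sum_Ico_add']
        push_cast
        rfl
    _ ≤ 2 / (j + 1) := sum_Ioo_inv_sq_le j (N + 1)

lemma sum_range_inv_sq_mul_sum_le {b : ℕ → ℝ} (hb : ∀ j, 0 ≤ b j) (N : ℕ) :
    ∑ n ∈ Finset.range N, (((n : ℝ) + 1) ^ 2)⁻¹ * ∑ j ∈ Finset.range (n + 1), b j ≤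
      2 * ∑ j ∈ Finset.range N, b j / (j + 1) := by
  calc ∑ n ∈ Finset.range N, (((n : ℝ) + 1) ^ 2)⁻¹ * ∑ j ∈ Finset.range (n + 1), b j
      = ∑ j ∈ Finset.range N, b j * ∑ n ∈ Finset.Ico j N, (((n : ℝ) + 1) ^ 2)⁻¹ := by
        simp_rw [Finset.mul_sum, Finset.range_eq_Ico, mul_comm (b _)]
        exact (Finset.sum_Ico_Ico_comm 0 N fun j n => (((n : ℝ) + 1) ^ 2)⁻¹ * b j).symm
    _ ≤ ∑ j ∈ Finset.range N, b j * (2 / (j + 1)) :=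
        Finset.sum_le_sum fun j _ =>
          mul_le_mul_of_nonneg_left (sum_Ico_inv_add_one_sq_le j N) (hb j)
    _ = 2 * ∑ j ∈ Finset.range N, b j / (j + 1) := by
        rw [Finset.mul_sum]
        exact Finset.sum_congr rfl fun j _ => by ring

theorem sum_prod_range_rpow_inv_le (ha : ∀ j, 0 ≤ a j) (N : ℕ) :
    ∑ n ∈ Finset.range N, (∏ j ∈ Finset.range (n + 1), a j) ^ ((n : ℝ) + 1)⁻¹ ≤
      2 * Real.exp 1 * ∑ j ∈ Finset.range N, a j := by
  calc ∑ n ∈ Finset.range N, (∏ j ∈ Finset.range (n + 1), a j) ^ ((n : ℝ) + 1)⁻¹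
      ≤ Real.exp 1 * ∑ n ∈ Finset.range N,
          (((n : ℝ) + 1) ^ 2)⁻¹ * ∑ j ∈ Finset.range (n + 1), (j + 1) * a j := by
        rw [Finset.mul_sum]
        exact Finset.sum_le_sum fun n _ => prod_range_rpow_inv_le ha n
    _ ≤ Real.exp 1 * (2 * ∑ j ∈ Finset.range N, (j + 1) * a j / (j + 1)) := by
        gcongr
        exact sum_range_inv_sq_mul_sum_le (fun j => mul_nonneg (by positivity) (ha j)) N
    _ = 2 * Real.exp 1 * ∑ j ∈ Finset.range N, a j := by
        have hcancel (j : ℕ) : ((j : ℝ) + 1) * a j / (j + 1) = a j := by field_simp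
        simp_rw [hcancel]
        ring

theorem summable_prod_range_rpow_inv (ha : ∀ j, 0 ≤ a j) (hs : Summable a) :
    Summable fun n : ℕ => (∏ j ∈ Finset.range (n + 1), a j) ^ ((n : ℝ) + 1)⁻¹ := by
  refine summable_of_sum_range_le (c := 2 * Real.exp 1 * ∑' j, a j)
    (fun n => Real.rpow_nonneg (Finset.prod_nonneg fun j _ => ha j) _) fun N => ?_
  refine (sum_prod_range_rpow_inv_le ha N).trans ?_
  gcongr
  exact hs.sum_le_tsum _ fun j _ => ha j

end CarlemanInequality

section RpowRescaling

lemma rpow_le_max_inv {c x : ℝ} (hc : 0 < c) (hx : |x| ≤ 1) : c ^ x ≤ max c c⁻¹ := by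
  obtain ⟨hx₁, hx₂⟩ := abs_le.1 hx
  rcases le_total 1 c with h | h
  · exact le_max_of_le_left (by simpa using Real.rpow_le_rpow_of_exponent_le h hx₂)
  · exact le_max_of_le_right
      (by simpa [Real.rpow_neg_one] using Real.rpow_le_rpow_of_exponent_ge hc h hx₁)

lemma summable_rpow_of_const_mul {ι : Type*} {c : ℝ} {u e : ι → ℝ} (hc : 0 < c)
    (hu : ∀ i, 0 ≤ u i) (he : ∀ i, |e i| ≤ 1) (hs : Summable fun i => (c * u i) ^ e i) :
    Summable fun i => u i ^ e i := by
  refine Summable.of_nonneg_of_le (fun i => Real.rpow_nonneg (hu i) _) (fun i => ?_)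
    (hs.mul_left (max c⁻¹ c⁻¹⁻¹))
  calc u i ^ e i = c⁻¹ ^ e i * (c * u i) ^ e i := by
        rw [← Real.mul_rpow (by positivity) (mul_nonneg hc.le (hu i)), inv_mul_cancel_left₀ hc.ne']
    _ ≤ max c⁻¹ c⁻¹⁻¹ * (c * u i) ^ e i :=
        mul_le_mul_of_nonneg_right (rpow_le_max_inv (inv_pos.2 hc) (he i))
          (Real.rpow_nonneg (mul_nonneg hc.le (hu i)) _)

lemma abs_neg_inv_natCast_add_one_le_one (n : ℕ) : |-((n : ℝ) + 1)⁻¹| ≤ 1 := by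
  rw [abs_neg, abs_of_nonneg (by positivity)]
  exact inv_le_one_of_one_le₀ (by linarith [n.cast_nonneg (α := ℝ)])

lemma summable_rpow_neg_inv_of_summable_div {M : ℕ → ℝ} (hM : ∀ k, 0 < M k)
    (hs : Summable fun n => M n / M (n + 1)) :
    Summable fun n : ℕ => M (n + 1) ^ (-((n : ℝ) + 1)⁻¹) := by
  have hprod (n : ℕ) : ∏ j ∈ Finset.range n, M j / M (j + 1) = M 0 / M n :=
    Finset.prod_range_induction _ (fun k => M 0 / M k) (div_self (hM 0).ne') n
      fun k _ => (div_mul_div_cancel₀ (hM k).ne').symm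
  refine summable_rpow_of_const_mul (inv_pos.2 (hM 0)) (fun n => (hM (n + 1)).le)
    abs_neg_inv_natCast_add_one_le_one ?_
  refine (summable_prod_range_rpow_inv (fun j => (div_pos (hM j) (hM (j + 1))).le) hs).congr
    fun n => ?_
  rw [hprod, Real.rpow_neg (mul_nonneg (inv_pos.2 (hM 0)).le (hM _).le),
    ← Real.inv_rpow (mul_nonneg (inv_pos.2 (hM 0)).le (hM _).le), inv_mul_eq_div, inv_div]

end RpowRescaling

/-! ### The Denjoy–Carleman theorem -/

/-- Log-convexity of a nonnegative sequence, the regularity asked of the derivative bounds in the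
Denjoy–Carleman theorem. It is stated multiplicatively because `Real.log 0 = 0`. -/
def LogConvexSeq (M : ℕ → ℝ) : Prop :=
  ∀ k, M (k + 1) ^ 2 ≤ M k * M (k + 2)

lemma LogConvexSeq.monotone_div {M : ℕ → ℝ} (hlog : LogConvexSeq M) (hM : ∀ k, 0 < M k) :
    Monotone fun k => M (k + 1) / M k :=
  monotone_nat_of_le_succ fun k => by
    rw [div_le_div_iff₀ (hM _) (hM _)]
    linarith [hlog k]

section DenjoyCarleman

variable {E : Type*} [NormedAddCommGroup E] [NormedSpace ℝ E]

/-- The condition that Bang's degree of `f` at `x`, relative to the bounds `M` on the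
derivatives, is at least `p`; it measures how close `f` is to being flat at `x`. Orders `k ≥ p` need
not be excluded: there the estimate follows from the global bound `‖f⁽ᵏ⁾‖ ≤ M k`. -/
def BangDegreeGE (f : ℝ → E) (M : ℕ → ℝ) (p : ℕ) (x : ℝ) : Prop :=
  ∀ k : ℕ, ‖iteratedDeriv k f x‖ ≤ Real.exp (k - p) * M k

lemma norm_le_mul_exp_of_norm_deriv_right_le {f f' : ℝ → E} {x y a C : ℝ} (hxy : x ≤ y)
    (hcont : ContinuousOn f (Set.Icc x y))
    (hderiv : ∀ s ∈ Set.Ico x y, HasDerivWithinAt f (f' s) (Set.Ici s) s)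
    (hx : ‖f x‖ ≤ C) (hbound : ∀ s ∈ Set.Ico x y, ‖f' s‖ ≤ C * (Real.exp (a * (s - x)) * a)) :
    ‖f y‖ ≤ C * Real.exp (a * (y - x)) := by
  have hB (s : ℝ) : HasDerivAt (fun s => C * Real.exp (a * (s - x)))
      (C * (Real.exp (a * (s - x)) * a)) s := by
    simpa using ((((hasDerivAt_id s).sub_const x).const_mul a).exp).const_mul C
  exact image_norm_le_of_norm_deriv_right_le_deriv_boundary hcont hderiv (by simpa using hx) hB
    hbound (Set.right_mem_Icc.2 hxy)

lemma hasDerivAt_iteratedDeriv {f : ℝ → E} (hf : ContDiff ℝ ∞ f) (k : ℕ) (x : ℝ) :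
    HasDerivAt (iteratedDeriv k f) (iteratedDeriv (k + 1) f x) x := by
  rw [iteratedDeriv_succ]
  exact (hf.differentiable_iteratedDeriv k (mod_cast WithTop.coe_lt_top _) x).hasDerivAt

lemma BangDegreeGE.eq_zero {f : ℝ → E} {M : ℕ → ℝ} {x : ℝ} (h : ∀ p, BangDegreeGE f M p x) :
    f x = 0 := by
  have hbound (p : ℕ) : ‖f x‖ ≤ Real.exp (-p) * M 0 := by simpa using h p 0
  have hlim : Tendsto (fun p : ℕ => Real.exp (-p) * M 0) atTop (𝓝 0) := by
    simpa using (Real.tendsto_exp_neg_atTop_nhds_zero.comp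
      tendsto_natCast_atTop_atTop).mul_const (M 0)
  exact norm_le_zero_iff.1 (ge_of_tendsto' hlim hbound)

variable {f : ℝ → E} {M : ℕ → ℝ} {x₀ x y : ℝ} {p : ℕ}

/- Downward induction on `k`: by log-convexity `M (k + 1) ≤ (M (p + 1) / M p) * M k`, so the bound
for the derivative of order `k + 1` integrates to the bound for order `k` with the same rate. -/
lemma BangDegreeGE.norm_iteratedDeriv_le (hf : ContDiff ℝ ∞ f) (hM : ∀ k, 0 < M k)
    (hlog : LogConvexSeq M) (hbound : ∀ k x, ‖iteratedDeriv k f x‖ ≤ M k)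
    (h : BangDegreeGE f M (p + 1) x) {k : ℕ} (hk : k ≤ p + 1) (hxy : x ≤ y) :
    ‖iteratedDeriv k f y‖ ≤ Real.exp (k - (p + 1 : ℕ)) * M k *
      Real.exp (Real.exp 1 * (M (p + 1) / M p) * (y - x)) := by
  have hrate : 0 < M (p + 1) / M p := div_pos (hM _) (hM _)
  induction hk using Nat.decreasingInduction generalizing y with
  | self =>
    have hexp : 1 ≤ Real.exp (Real.exp 1 * (M (p + 1) / M p) * (y - x)) :=
      Real.one_le_exp (mul_nonneg (by positivity) (sub_nonneg.2 hxy))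
    rw [sub_self, Real.exp_zero, one_mul]
    exact (hbound _ y).trans (le_mul_of_one_le_right (hM _).le hexp)
  | of_succ k hk ih =>
    have hratio : M (k + 1) ≤ M (p + 1) / M p * M k :=
      (div_le_iff₀ (hM k)).1 (hlog.monotone_div hM (Nat.le_of_lt_succ hk))
    have hexp : Real.exp ((k + 1 : ℕ) - (p + 1 : ℕ)) =
        Real.exp (k - (p + 1 : ℕ)) * Real.exp 1 := by
      rw [← Real.exp_add]
      push_cast
      ring_nf
    refine norm_le_mul_exp_of_norm_deriv_right_le hxy
      (fun s _ => (hasDerivAt_iteratedDeriv hf k s).continuousAt.continuousWithinAt)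
      (fun s _ => (hasDerivAt_iteratedDeriv hf k s).hasDerivWithinAt) (h k) fun s hs => ?_
    set g := Real.exp (Real.exp 1 * (M (p + 1) / M p) * (s - x))
    calc ‖iteratedDeriv (k + 1) f s‖
        ≤ Real.exp ((k + 1 : ℕ) - (p + 1 : ℕ)) * M (k + 1) * g := ih hs.1
      _ ≤ Real.exp ((k + 1 : ℕ) - (p + 1 : ℕ)) * (M (p + 1) / M p * M k) * g := by gcongr
      _ = Real.exp (k - (p + 1 : ℕ)) * M k * (g * (Real.exp 1 * (M (p + 1) / M p))) := by
        rw [hexp]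
        ring

lemma BangDegreeGE.of_succ (hf : ContDiff ℝ ∞ f) (hM : ∀ k, 0 < M k) (hlog : LogConvexSeq M)
    (hbound : ∀ k x, ‖iteratedDeriv k f x‖ ≤ M k) (h : BangDegreeGE f M (p + 1) x) (hxy : x ≤ y)
    (hdist : Real.exp 1 * (y - x) ≤ M p / M (p + 1)) : BangDegreeGE f M p y := by
  intro k
  rcases le_total k (p + 1) with hk | hk
  · have hgrowth : Real.exp 1 * (M (p + 1) / M p) * (y - x) ≤ 1 := by
      rw [mul_right_comm, ← inv_div, ← div_eq_mul_inv]
      exact div_le_one_of_le₀ hdist (div_pos (hM _) (hM _)).le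
    have hMk := hM k
    calc ‖iteratedDeriv k f y‖
        ≤ Real.exp (k - (p + 1 : ℕ)) * M k *
            Real.exp (Real.exp 1 * (M (p + 1) / M p) * (y - x)) :=
          h.norm_iteratedDeriv_le hf hM hlog hbound hk hxy
      _ ≤ Real.exp (k - (p + 1 : ℕ)) * M k * Real.exp 1 := by gcongr
      _ = Real.exp (k - p) * M k := by
        rw [mul_right_comm, ← Real.exp_add]
        push_cast
        ring_nf
  · refine (hbound k y).trans (le_mul_of_one_le_left (hM k).le (Real.one_le_exp ?_))
    exact sub_nonneg.2 (mod_cast (Nat.le_succ p).trans hk)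

/- The degree is infinite at a point of flatness, and dropping it from `p + 1` to `p` costs a
distance of `M p / M (p + 1)` up to the factor `e`. -/
lemma bangDegreeGE_of_flat (hf : ContDiff ℝ ∞ f) (hM : ∀ k, 0 < M k) (hlog : LogConvexSeq M)
    (hbound : ∀ k x, ‖iteratedDeriv k f x‖ ≤ M k) (hflat : ∀ k, iteratedDeriv k f x₀ = 0)
    {q : ℕ} (hpq : p ≤ q) (hx : x₀ ≤ x)
    (hdist : Real.exp 1 * (x - x₀) ≤ ∑ i ∈ Finset.Ico p q, M i / M (i + 1)) :
    BangDegreeGE f M p x := by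
  induction hpq using Nat.decreasingInduction generalizing x with
  | self =>
    have hle : x ≤ x₀ := by
      rw [Finset.Ico_self, Finset.sum_empty] at hdist
      exact sub_nonpos.1 (nonpos_of_mul_nonpos_right hdist (Real.exp_pos 1))
    obtain rfl := le_antisymm hx hle
    intro k
    rw [hflat, norm_zero]
    exact mul_nonneg (Real.exp_pos _).le (hM k).le
  | of_succ p hpq ih =>
    rw [Finset.sum_eq_sum_Ico_succ_bot hpq] at hdist
    have hrest : 0 ≤ ∑ i ∈ Finset.Ico (p + 1) q, M i / M (i + 1) :=
      Finset.sum_nonneg fun i _ => (div_pos (hM i) (hM (i + 1))).le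
    set r := M p / M (p + 1) / Real.exp 1
    have hr_mul : Real.exp 1 * r = M p / M (p + 1) := mul_div_cancel₀ _ (Real.exp_pos 1).ne'
    have hr_nonneg : 0 ≤ r := div_nonneg (div_pos (hM _) (hM _)).le (Real.exp_pos 1).le
    rcases le_total x (x₀ + r) with hxr | hxr
    · refine (ih le_rfl (by simpa using hrest)).of_succ hf hM hlog hbound hx ?_
      rw [← hr_mul]
      gcongr
      linarith
    · refine (ih (x := x - r) (by linarith) ?_).of_succ hf hM hlog hbound (by linarith) ?_
      · linarith
      · rw [sub_sub_cancel, hr_mul]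

lemma eq_zero_of_flat_of_le (hf : ContDiff ℝ ∞ f) (hM : ∀ k, 0 < M k) (hlog : LogConvexSeq M)
    (hbound : ∀ k x, ‖iteratedDeriv k f x‖ ≤ M k) (hflat : ∀ k, iteratedDeriv k f x₀ = 0)
    (hdiv : ¬ Summable fun n => M n / M (n + 1)) (hx : x₀ ≤ x) : f x = 0 := by
  refine BangDegreeGE.eq_zero (M := M) fun p => ?_
  have htail : Tendsto (fun q => ∑ i ∈ Finset.range q, M (p + i) / M (p + i + 1)) atTop atTop := by
    refine (not_summable_iff_tendsto_nat_atTop_of_nonneg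
      fun i => (div_pos (hM _) (hM _)).le).1 fun hs => hdiv ?_
    simp_rw [add_comm p] at hs
    exact (summable_nat_add_iff (f := fun n => M n / M (n + 1)) p).1 hs
  obtain ⟨d, hd⟩ := (htail.eventually_ge_atTop (Real.exp 1 * (x - x₀))).exists
  refine bangDegreeGE_of_flat hf hM hlog hbound hflat (Nat.le_add_right p d) hx ?_
  rwa [Finset.sum_Ico_eq_sum_range, Nat.add_sub_cancel_left]

theorem eq_zero_of_flat_of_not_summable_div (hf : ContDiff ℝ ∞ f) (hM : ∀ k, 0 < M k)
    (hlog : LogConvexSeq M) (hbound : ∀ k x, ‖iteratedDeriv k f x‖ ≤ M k)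
    (hflat : ∀ k, iteratedDeriv k f x₀ = 0)
    (hdiv : ¬ Summable fun n => M n / M (n + 1)) : f = 0 := by
  funext x
  rcases le_total x₀ x with hx | hx
  · exact eq_zero_of_flat_of_le hf hM hlog hbound hflat hdiv hx
  · have hreflect : (fun t => f (-t)) (-x) = 0 :=
      eq_zero_of_flat_of_le (f := fun t => f (-t)) (x₀ := -x₀) (hf.comp contDiff_neg) hM hlog
        (fun k t => by simpa [iteratedDeriv_comp_neg, norm_smul] using hbound k (-t))
        (fun k => by simp [iteratedDeriv_comp_neg, hflat]) hdiv (neg_le_neg hx)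
    simpa using hreflect

theorem eq_zero_of_flat_of_not_summable_rpow_neg_inv (hf : ContDiff ℝ ∞ f) (hM : ∀ k, 0 < M k)
    (hlog : LogConvexSeq M) (hbound : ∀ k x, ‖iteratedDeriv k f x‖ ≤ M k)
    (hflat : ∀ k, iteratedDeriv k f x₀ = 0)
    (hdiv : ¬ Summable fun n : ℕ => M (n + 1) ^ (-((n : ℝ) + 1)⁻¹)) : f = 0 :=
  eq_zero_of_flat_of_not_summable_div hf hM hlog hbound hflat
    fun hs => hdiv (summable_rpow_neg_inv_of_summable_div hM hs)

end DenjoyCarleman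

/-! ### Absolute moments and the characteristic function -/

section AbsoluteMoments

variable {E : Type*} [MeasurableSpace E] [NormedAddCommGroup E] {μ ν : Measure E}

/-- The absolute moment of order `k` of a measure on a normed space, which bounds the `k`-th
derivative of its characteristic function. It is `0` if `‖x‖ ^ k` is not integrable. -/
noncomputable def absMoment (μ : Measure E) (k : ℕ) : ℝ :=
  ∫ x, ‖x‖ ^ k ∂μ

lemma absMoment_add_measure {k : ℕ} (hμ : Integrable (fun x => ‖x‖ ^ k) μ)
    (hν : Integrable (fun x => ‖x‖ ^ k) ν) :
    absMoment (μ + ν) k = absMoment μ k + absMoment ν k :=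
  integral_add_measure hμ hν

lemma absMoment_pos {k : ℕ} (hμ : Integrable (fun x => ‖x‖ ^ k) μ) (h0 : ¬ ∀ᵐ x ∂μ, x = 0) :
    0 < absMoment μ k := by
  have hnonneg : 0 ≤ fun x : E => ‖x‖ ^ k := fun x => pow_nonneg (norm_nonneg x) k
  refine (integral_nonneg hnonneg).lt_of_ne' fun hzero => h0 ?_
  filter_upwards [(integral_eq_zero_iff_of_nonneg hnonneg hμ).1 hzero] with x hx
  exact norm_eq_zero.1 (eq_zero_of_pow_eq_zero hx)

/- The quadratic polynomial `s ↦ ∫ ‖x‖ ^ k * (s + ‖x‖) ^ 2 ∂μ` is nonnegative. -/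
lemma logConvexSeq_absMoment (hμ : ∀ k : ℕ, Integrable (fun x => ‖x‖ ^ k) μ) :
    LogConvexSeq (absMoment μ) := by
  intro k
  have hquad (s : ℝ) : ∫ x, ‖x‖ ^ k * (s + ‖x‖) ^ 2 ∂μ =
      absMoment μ k * (s * s) + 2 * absMoment μ (k + 1) * s + absMoment μ (k + 2) := by
    have hexpand (x : E) : ‖x‖ ^ k * (s + ‖x‖) ^ 2 =
        (s * s) * ‖x‖ ^ k + 2 * s * ‖x‖ ^ (k + 1) + ‖x‖ ^ (k + 2) := by ring
    have h₀ := (hμ k).const_mul (s * s)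
    have h₁ := (hμ (k + 1)).const_mul (2 * s)
    simp_rw [hexpand]
    rw [integral_add (h₀.fun_add h₁) (hμ (k + 2)), integral_add h₀ h₁,
      integral_const_mul, integral_const_mul]
    unfold absMoment
    ring
  have hdiscrim := discrim_le_zero fun s : ℝ =>
    hquad s ▸ integral_nonneg fun x : E => by positivity
  rw [discrim] at hdiscrim
  linarith

lemma memLp_id_of_integrable_norm_pow [OpensMeasurableSpace E] [SecondCountableTopology E]
    {k : ℕ} (hμ : Integrable (fun x => ‖x‖ ^ k) μ) : MemLp id k μ := by
  have hmeas : AEStronglyMeasurable (id : E → E) μ := aestronglyMeasurable_id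
  rcases eq_or_ne k 0 with rfl | hk
  · simpa using hmeas
  · exact (integrable_norm_rpow_iff hmeas (mod_cast hk) (ENNReal.natCast_ne_top k)).1
      (by simpa using hμ)

end AbsoluteMoments

section CharFun

variable {μ ν : Measure ℝ}

lemma norm_iteratedDeriv_charFun_le [IsFiniteMeasure μ] {k : ℕ} (hμ : MemLp id k μ) (t : ℝ) :
    ‖iteratedDeriv k (charFun μ) t‖ ≤ absMoment μ k := by
  rw [iteratedDeriv_charFun hμ, norm_mul, norm_pow, Complex.norm_I, one_pow, one_mul]
  refine (norm_integral_le_integral_norm _).trans_eq (integral_congr_ae (ae_of_all _ fun x => ?_))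
  dsimp only
  rw [norm_mul, ← Complex.ofReal_mul, Complex.norm_exp_ofReal_mul_I, mul_one, norm_pow,
    Complex.norm_real]

lemma absMoment_two_mul (μ : Measure ℝ) (m : ℕ) : absMoment μ (2 * m) = ∫ t, t ^ (2 * m) ∂μ := by
  simp only [absMoment, Real.norm_eq_abs, (even_two_mul m).pow_abs]

lemma Carleman.not_ae_eq_zero (hν : Carleman ν) : ¬ ∀ᵐ t ∂ν, t = 0 := by
  refine fun h0 => hν (summable_zero.congr fun m => ?_)
  have hmoment : ∫ t, |t| ^ (2 * (m + 1)) ∂ν = 0 :=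
    integral_eq_zero_of_ae (h0.mono fun t ht => by simp [ht])
  rw [hmoment, Real.zero_rpow (neg_ne_zero.2 (by positivity))]

lemma Carleman.not_summable_absMoment_add (hcar : Carleman ν)
    (hμ : ∀ k : ℕ, Integrable (fun t => ‖t‖ ^ k) μ)
    (hν : ∀ k : ℕ, Integrable (fun t => ‖t‖ ^ k) ν)
    (hmoment : ∀ k : ℕ, ∫ t, t ^ k ∂μ = ∫ t, t ^ k ∂ν) :
    ¬ Summable fun n : ℕ => absMoment (μ + ν) (n + 1) ^ (-((n : ℝ) + 1)⁻¹) := by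
  intro hs
  have hodd : Function.Injective fun m : ℕ => 2 * m + 1 := fun m n h => by simpa using h
  have hexponent (m : ℕ) :
      -(1 / (2 * (m + 1) : ℝ)) = -(((2 * m + 1 : ℕ) : ℝ) + 1)⁻¹ := by
    push_cast
    ring
  have heven (m : ℕ) : absMoment (μ + ν) (2 * m + 1 + 1) = 2 * absMoment ν (2 * (m + 1)) := by
    rw [show 2 * m + 1 + 1 = 2 * (m + 1) by ring, absMoment_add_measure (hμ _) (hν _),
      absMoment_two_mul, absMoment_two_mul, hmoment, ← two_mul]
  refine hcar (summable_rpow_of_const_mul two_pos (fun m => by positivity) (fun m => ?_)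
    ((hs.comp_injective hodd).congr fun m => ?_))
  · rw [hexponent]
    exact abs_neg_inv_natCast_add_one_le_one _
  · rw [hexponent, Function.comp_apply, heven]
    rfl

theorem charFun_eq_of_moment_eq [IsFiniteMeasure μ] [IsFiniteMeasure ν]
    (hμ : ∀ k : ℕ, Integrable (fun t => ‖t‖ ^ k) μ)
    (hν : ∀ k : ℕ, Integrable (fun t => ‖t‖ ^ k) ν) (hcar : Carleman ν)
    (hmoment : ∀ k : ℕ, ∫ t, t ^ k ∂μ = ∫ t, t ^ k ∂ν) : charFun μ = charFun ν := by
  have hμp (k : ℕ) : MemLp id k μ := memLp_id_of_integrable_norm_pow (hμ k)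
  have hνp (k : ℕ) : MemLp id k ν := memLp_id_of_integrable_norm_pow (hν k)
  have hsum (k : ℕ) : Integrable (fun t => ‖t‖ ^ k) (μ + ν) := (hμ k).add_measure (hν k)
  have h0 : ¬ ∀ᵐ t ∂(μ + ν), t = 0 := fun h =>
    hcar.not_ae_eq_zero (ae_add_measure_iff.1 h).2
  have hderiv (k : ℕ) (t : ℝ) : iteratedDeriv k (charFun μ - charFun ν) t =
      iteratedDeriv k (charFun μ) t - iteratedDeriv k (charFun ν) t :=
    iteratedDeriv_sub (contDiff_charFun (hμp k)).contDiffAt (contDiff_charFun (hνp k)).contDiffAt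
  refine sub_eq_zero.1 (eq_zero_of_flat_of_not_summable_rpow_neg_inv (M := absMoment (μ + ν))
    (x₀ := 0) ((contDiff_charFun' hμp).sub (contDiff_charFun' hνp))
    (fun k => absMoment_pos (hsum k) h0) (logConvexSeq_absMoment hsum) (fun k t => ?_)
    (fun k => ?_) (hcar.not_summable_absMoment_add hμ hν hmoment))
  · rw [hderiv, absMoment_add_measure (hμ k) (hν k)]
    exact (norm_sub_le _ _).trans (add_le_add (norm_iteratedDeriv_charFun_le (hμp k) t)
      (norm_iteratedDeriv_charFun_le (hνp k) t))
  · rw [hderiv, iteratedDeriv_charFun_zero (hμp k), iteratedDeriv_charFun_zero (hνp k), hmoment,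
      sub_self]

end CharFun

theorem stmt9_general (ν : Measure ℝ) (hmom : ∀ m : ℕ, Integrable (fun t => |t| ^ m) ν)
    (hcar : Carleman ν) (μ : Measure ℝ) (hmomμ : ∀ m : ℕ, Integrable (fun t => |t| ^ m) μ)
    (hmoment : ∀ m : ℕ, ∫ t, t ^ m ∂μ = ∫ t, t ^ m ∂ν) : μ = ν := by
  have hfinite {ρ : Measure ℝ} (hρ : Integrable (fun t => |t| ^ 0) ρ) : IsFiniteMeasure ρ := by
    simpa [integrable_const_iff, isFiniteMeasure_iff] using hρ
  have := hfinite (hmom 0)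
  have := hfinite (hmomμ 0)
  exact Measure.ext_of_charFun (charFun_eq_of_moment_eq hmomμ hmom hcar hmoment)

theorem stmt9 (ν : Measure ℝ) [IsProbabilityMeasure ν]
    (hmom : ∀ m : ℕ, Integrable (fun t => |t| ^ m) ν)
    (hcar : Carleman ν) :
    ∀ μ : Measure ℝ, IsProbabilityMeasure μ →
      (∀ m : ℕ, Integrable (fun t => |t| ^ m) μ) →
      (∀ m : ℕ, (∫ t, t ^ m ∂μ) = ∫ t, t ^ m ∂ν) → μ = ν :=
  fun μ _ hmomμ hmoment => stmt9_general ν hmom hcar μ hmomμ hmoment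
end

section
/- (Petersen's theorem) Let μ and ν be Borel probability measures on ℝ^d with identical mixed moments of all orders. If each one-dimensional coordinate marginal of μ is determined by its moments (e.g., satisfies Carleman's condition), then μ = ν. -/
open MeasureTheory Filter
open scoped InnerProductSpace ENNReal Topology BigOperators

/-!
Let `ρ` be a moment-determinate measure on the line. By the Riesz extension theorem, the integral
of a continuous function `u` of polynomial growth is the supremum of `∫ p ∂ρ` over the polynomials
`p ≤ u`: otherwise integration of polynomials would have a positive extension with another value
at `u`, and the measure representing it would have the moments of `ρ`. Take `u x = (1 + x ^ 2)⁻¹`.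
If `p ≤ u`, the polynomial `1 - (1 + x ^ 2) p` is nonnegative, hence equal to `|s| ^ 2` on the
line, where `s` can be chosen with `1 ≤ |s i|`; then `(1 - s / s i) / (x - i)` is a polynomial and
differs from `(x - i)⁻¹` by at most `(u - p) ^ (1 / 2)` in modulus. So `(x - i)⁻¹` lies in the
closure of the polynomials in `L²(ρ)`.

Suppose now that `μ` and `ν` have the same moments. By determinacy they have the same marginals,
so each `φ x = (x j - i)⁻¹` is approximated by polynomials in both `L²(μ)` and `L²(ν)`.
Consequently, if `G` is bounded and `∫ G P ∂μ = ∫ G P ∂ν` for all polynomials `P`, then `φ G` has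
the same property. The functions `φ` with this multiplier property form a star-algebra of bounded
functions which separates points, on which `μ` and `ν` have the same integrals; therefore `μ = ν`.
-/

section Polynomials

open Polynomial ComplexConjugate

lemma eval_nonneg_of_eval_mul_nonneg {q r : ℝ[X]} (hq0 : q ≠ 0) (hq : ∀ x, 0 ≤ q.eval x)
    (hqr : ∀ x, 0 ≤ (q * r).eval x) (x : ℝ) : 0 ≤ r.eval x := by
  have hdense : Dense {x | q.IsRoot x}ᶜ := (finite_setOfPred_isRoot hq0).countable.dense_compl ℝ
  refine (isClosed_le continuous_const r.continuous).closure_subset_iff.2 (fun y hy ↦ ?_)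
    (hdense x)
  have hqy : 0 < q.eval y := (hq y).lt_of_ne' hy
  exact nonneg_of_mul_nonneg_right (by simpa only [eval_mul] using hqr y) hqy

lemma map_sq_sub_add_sq_eq_mul_conj (z : ℂ) :
    (X ^ 2 - C (2 * z.re) * X + C (‖z‖ ^ 2) : ℝ[X]).map (algebraMap ℝ ℂ) =
      (X - C z) * (X - C (conj z)) := by
  calc
    _ = X ^ 2 - C (↑(2 * z.re) : ℂ) * X + C (‖z‖ ^ 2 : ℂ) := by simp
    _ = (X - C z) * (X - C (conj z)) := by
      rw [← Complex.add_conj, map_add, ← Complex.mul_conj', map_mul]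
      ring

lemma quadratic_dvd_of_eval_nonneg {r : ℝ[X]} (hr : ∀ x, 0 ≤ r.eval x) {z : ℂ}
    (hz : aeval z r = 0) : X ^ 2 - C (2 * z.re) * X + C (‖z‖ ^ 2) ∣ r := by
  obtain rfl | hr0 := eq_or_ne r 0
  · exact dvd_zero _
  by_cases him : z.im = 0
  · obtain ⟨a, rfl⟩ : ∃ a : ℝ, z = a := ⟨z.re, Complex.ext rfl (by simpa using him)⟩
    have hroot : r.eval a = 0 := by
      rwa [← Complex.coe_algebraMap, aeval_algebraMap_eq_zero_iff, coe_aeval_eq_eval] at hz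
    have hmin : IsLocalMin (fun x ↦ r.eval x) a :=
      Eventually.of_forall fun x ↦ hroot.trans_le (hr x)
    have hderiv : (derivative r).IsRoot a := hmin.hasDerivAt_eq_zero (r.hasDerivAt a)
    have hmult : 2 ≤ r.rootMultiplicity a :=
      (one_lt_rootMultiplicity_iff_isRoot hr0).2 ⟨hroot, hderiv⟩
    convert! (le_rootMultiplicity_iff hr0).1 hmult using 1
    simp only [Complex.ofReal_re, Complex.norm_real, Real.norm_eq_abs, sq_abs, C_mul, C_pow,
      map_ofNat]
    ring
  · exact r.quadratic_dvd_of_aeval_eq_zero_im_ne_zero hz him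

theorem exists_mul_map_conj_eq_of_eval_nonneg {r : ℝ[X]} (hr : ∀ x, 0 ≤ r.eval x) :
    ∃ s : ℂ[X], s * s.map (starRingEnd ℂ) = r.map (algebraMap ℝ ℂ) := by
  induction hn : r.natDegree using Nat.strong_induction_on generalizing r with
  | _ n ih =>
  subst hn
  by_cases hdeg : r.natDegree = 0
  · obtain ⟨c, rfl⟩ := natDegree_eq_zero.1 hdeg
    have hc : 0 ≤ c := by simpa using hr 0
    refine ⟨C (√c : ℂ), ?_⟩
    rw [map_C, ← C_mul, map_C, Complex.conj_ofReal, ← Complex.ofReal_mul, Real.mul_self_sqrt hc]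
    rfl
  obtain ⟨z, hz⟩ : ∃ z : ℂ, aeval z r = 0 :=
    IsAlgClosed.exists_aeval_eq_zero _ _ (degree_ne_of_natDegree_ne hdeg)
  set q : ℝ[X] := X ^ 2 - C (2 * z.re) * X + C (‖z‖ ^ 2) with hq
  obtain ⟨t, rfl⟩ : q ∣ r := quadratic_dvd_of_eval_nonneg hr hz
  have hqdeg : q.natDegree = 2 := by rw [hq]; compute_degree!
  have hq0 : q ≠ 0 := by rintro h; simp [h] at hqdeg
  have ht0 : t ≠ 0 := by rintro rfl; simp at hdeg
  have hqnonneg (x : ℝ) : 0 ≤ q.eval x := by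
    have : q.eval x = (x - z.re) ^ 2 + z.im ^ 2 := by
      simp only [hq, ← Complex.normSq_eq_norm_sq, Complex.normSq_apply, eval_add, eval_sub,
        eval_mul, eval_pow, eval_X, eval_C]
      ring
    rw [this]
    positivity
  have htdeg : t.natDegree < (q * t).natDegree := by rw [natDegree_mul hq0 ht0]; lia
  obtain ⟨s, hs⟩ := ih _ htdeg (eval_nonneg_of_eval_mul_nonneg hq0 hqnonneg hr) rfl
  refine ⟨(X - C z) * s, ?_⟩
  rw [Polynomial.map_mul, Polynomial.map_mul, ← hs, map_sq_sub_add_sq_eq_mul_conj]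
  simp only [Polynomial.map_sub, map_X, map_C]
  ring

lemma normSq_eval_eq_of_mul_map_conj_eq {r : ℝ[X]} {s : ℂ[X]}
    (hs : s * s.map (starRingEnd ℂ) = r.map (algebraMap ℝ ℂ)) (x : ℝ) :
    ‖s.eval (x : ℂ)‖ ^ 2 = r.eval x := by
  have heval := congrArg (eval (x : ℂ)) hs
  have hconj : (s.map (starRingEnd ℂ)).eval (x : ℂ) = conj (s.eval (x : ℂ)) := by
    rw [← Complex.conj_ofReal x, eval_map_apply, Complex.conj_ofReal]
  rw [eval_mul, hconj, Complex.mul_conj', ← Complex.coe_algebraMap, eval_map_algebraMap,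
    aeval_algebraMap_apply] at heval
  exact_mod_cast heval

lemma exists_mul_map_conj_eq_one_le_norm_eval {r : ℝ[X]} (hr : ∀ x, 0 ≤ r.eval x) {z : ℂ}
    (hz : 1 ≤ ‖aeval z r‖) :
    ∃ s : ℂ[X], s * s.map (starRingEnd ℂ) = r.map (algebraMap ℝ ℂ) ∧ 1 ≤ ‖s.eval z‖ := by
  obtain ⟨s, hs⟩ := exists_mul_map_conj_eq_of_eval_nonneg hr
  by_cases h : 1 ≤ ‖s.eval z‖
  · exact ⟨s, hs, h⟩
  have hconj : (s.map (starRingEnd ℂ)).map (starRingEnd ℂ) = s := by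
    simp [Polynomial.map_map]
  refine ⟨s.map (starRingEnd ℂ), by rw [hconj, mul_comm, hs], ?_⟩
  by_contra! h'
  have hprod : ‖s.eval z‖ * ‖(s.map (starRingEnd ℂ)).eval z‖ = ‖aeval z r‖ := by
    rw [← norm_mul, ← eval_mul, hs, eval_map_algebraMap]
  nlinarith [norm_nonneg (s.eval z), norm_nonneg ((s.map (starRingEnd ℂ)).eval z)]

theorem exists_norm_inv_sub_I_sub_eval_sq_le {p : ℝ[X]} (hp : ∀ x, p.eval x ≤ (1 + x ^ 2)⁻¹) :
    ∃ q : ℂ[X], ∀ x : ℝ,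
      ‖((x : ℂ) - Complex.I)⁻¹ - q.eval (x : ℂ)‖ ^ 2 ≤ (1 + x ^ 2)⁻¹ - p.eval x := by
  set r : ℝ[X] := 1 - (1 + X ^ 2) * p with hr
  have hreval (x : ℝ) : r.eval x = (1 + x ^ 2) * ((1 + x ^ 2)⁻¹ - p.eval x) := by
    have : (1 + x ^ 2) ≠ 0 := by positivity
    simp only [hr, eval_sub, eval_mul, eval_add, eval_pow, eval_X, eval_one]
    field_simp
  have hrnonneg (x : ℝ) : 0 ≤ r.eval x := by
    rw [hreval]
    exact mul_nonneg (by positivity) (sub_nonneg.2 (hp x))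
  obtain ⟨s, hs, hsI⟩ := exists_mul_map_conj_eq_one_le_norm_eval hrnonneg (z := Complex.I)
    (by simp [hr])
  set c := s.eval Complex.I with hc
  have hc0 : c ≠ 0 := norm_pos_iff.1 (zero_lt_one.trans_le hsI)
  obtain ⟨q, hq⟩ : X - C Complex.I ∣ 1 - C c⁻¹ * s :=
    dvd_iff_isRoot.2 (by simp [← hc, hc0])
  refine ⟨q, fun x ↦ ?_⟩
  have hxI : (x : ℂ) - Complex.I ≠ 0 := fun h ↦ by simpa using congrArg Complex.im h
  have hnormSq : ‖(x : ℂ) - Complex.I‖ ^ 2 = 1 + x ^ 2 := by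
    simp only [← Complex.normSq_eq_norm_sq, Complex.normSq_apply, Complex.sub_re,
      Complex.ofReal_re, Complex.I_re, Complex.sub_im, Complex.ofReal_im, Complex.I_im]
    ring
  have hdiff : ((x : ℂ) - Complex.I)⁻¹ - q.eval (x : ℂ)
      = c⁻¹ * (s.eval (x : ℂ) / (x - Complex.I)) := by
    have hqx := congrArg (eval (x : ℂ)) hq
    simp only [eval_sub, eval_one, eval_mul, eval_C, eval_X] at hqx
    field_simp
    field_simp at hqx
    linear_combination hqx
  calc
    ‖((x : ℂ) - Complex.I)⁻¹ - q.eval (x : ℂ)‖ ^ 2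
      = (‖c‖ ^ 2)⁻¹ * (r.eval x / (1 + x ^ 2)) := by
        rw [hdiff, norm_mul, norm_div, norm_inv, mul_pow, div_pow, inv_pow, hnormSq,
          normSq_eval_eq_of_mul_map_conj_eq hs]
    _ ≤ 1 * (r.eval x / (1 + x ^ 2)) := by
        gcongr
        · exact div_nonneg (hrnonneg x) (by positivity)
        · exact inv_le_one_of_one_le₀ (one_le_pow₀ hsI)
    _ = (1 + x ^ 2)⁻¹ - p.eval x := by
        rw [hreval]
        field_simp

end Polynomials

theorem exists_nonneg_extension_le_apply {E : Type*} [AddCommGroup E] [Module ℝ E]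
    (s : PointedCone ℝ E) (f : E →ₗ.[ℝ] ℝ) (nonneg : ∀ x : f.domain, (x : E) ∈ s → 0 ≤ f x)
    (dense : ∀ y, ∃ x : f.domain, (x : E) + y ∈ s) {x₀ : E} {c : ℝ}
    (hc : ∀ x : f.domain, (x : E) - x₀ ∈ s → c ≤ f x) :
    ∃ g : E →ₗ[ℝ] ℝ, (∀ x : f.domain, g x = f x) ∧ (∀ x ∈ s, 0 ≤ g x) ∧ c ≤ g x₀ := by
  -- Extend `(x, t) ↦ f x - t c` from `f.domain × ℝ`, positively on `{(x, t) | t x₀ ≤ x, 0 ≤ t}`: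
  -- then nonnegativity at `(x₀, 1)` is the lower bound at `x₀`.
  let s' : PointedCone ℝ (E × ℝ) :=
    s.comap (.fst ℝ E ℝ - (LinearMap.snd ℝ E ℝ).smulRight x₀) ⊓
      (PointedCone.positive ℝ ℝ).comap (.snd ℝ E ℝ)
  have mem_s' (x : E) (t : ℝ) : (x, t) ∈ s' ↔ x - t • x₀ ∈ s ∧ 0 ≤ t := Iff.rfl
  let f' : E × ℝ →ₗ.[ℝ] ℝ := f.coprod (((-c) • LinearMap.id : ℝ →ₗ[ℝ] ℝ).toPMap ⊤)
  have f'_apply (x : f.domain) (t : ℝ) : f' ⟨(x, t), x.2, trivial⟩ = f x - t * c :=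
    calc
      f' ⟨(x, t), x.2, trivial⟩ = f x + -c * t := rfl
      _ = f x - t * c := by ring
  have nonneg' : ∀ z : f'.domain, (z : E × ℝ) ∈ s' → 0 ≤ f' z := by
    rintro ⟨⟨x, t⟩, hx, _⟩ hz
    obtain ⟨hxt, ht⟩ := (mem_s' x t).1 hz
    rw [f'_apply ⟨x, hx⟩, sub_nonneg]
    obtain rfl | ht := ht.eq_or_lt
    · simpa using nonneg ⟨x, hx⟩ (by simpa using hxt)
    · have h := hc (t⁻¹ • ⟨x, hx⟩) (by
        simpa [smul_sub, smul_smul, ht.ne'] using s.smul_mem (inv_nonneg.2 ht.le) hxt)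
      rwa [LinearPMap.map_smul, smul_eq_mul, inv_mul_eq_div, le_div_iff₀' ht] at h
  have dense' : ∀ z, ∃ y : f'.domain, (y : E × ℝ) + z ∈ s' := by
    rintro ⟨x, t⟩
    obtain ⟨y, hy⟩ := dense x
    exact ⟨⟨(y, -t), y.2, trivial⟩, (mem_s' _ _).2 (by simpa using hy)⟩
  obtain ⟨g, hgf, hgs⟩ := riesz_extension s' f' nonneg' dense'
  refine ⟨g ∘ₗ .inl ℝ E ℝ, fun x ↦ ?_, fun x hx ↦ hgs _ ((mem_s' _ _).2 (by simpa using hx)), ?_⟩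
  · simpa using (hgf ⟨(x, 0), x.2, trivial⟩).trans (f'_apply x 0)
  · have h₁ : 0 ≤ g (x₀, 1) := hgs _ ((mem_s' _ _).2 (by simp))
    have h₂ : g (0, 1) = -c := by
      simpa using (hgf ⟨(0, 1), zero_mem _, trivial⟩).trans (f'_apply 0 1)
    have h₃ : g (x₀, 1) = g (x₀, 0) + g (0, 1) := by rw [← map_add]; simp
    simp only [LinearMap.comp_apply, LinearMap.inl_apply]
    linarith

section Adapted

open CompactlySupported Asymptotics

variable {X : Type*} [TopologicalSpace X]

/-- Choquet's adapted spaces of continuous functions: every function of `E` is negligible at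
infinity compared with some other one. We require `E` to contain all compactly supported
functions; positive linear functionals on such a space are represented by measures. -/
structure IsAdapted (E : Submodule ℝ C(X, ℝ)) : Prop where
  coe_mem (f : C_c(X, ℝ)) : (f : C(X, ℝ)) ∈ E
  exists_isLittleO (g : C(X, ℝ)) (hg : g ∈ E) : ∃ h ∈ E, 0 ≤ h ∧ g =o[cocompact X] h

lemma exists_compactlySupported_eqOn_le [RegularSpace X] [LocallyCompactSpace X] {h : C(X, ℝ)}
    (hh : 0 ≤ h) {K : Set X} (hK : IsCompact K) :
    ∃ f : C_c(X, ℝ), Set.EqOn f h K ∧ (∀ x, 0 ≤ f x) ∧ ∀ x, f x ≤ h x := by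
  obtain ⟨χ, hχK, -, hχ, hχ01⟩ := exists_continuous_one_zero_of_isCompact hK isClosed_empty
    (Set.disjoint_empty K)
  refine ⟨⟨χ * h, hχ.mul_right⟩, fun x hx ↦ ?_, fun x ↦ mul_nonneg (hχ01 x).1 (hh x),
    fun x ↦ mul_le_of_le_one_left (hh x) (hχ01 x).2⟩
  change χ x * h x = h x
  rw [hχK hx, Pi.one_apply, one_mul]

lemma exists_compactlySupported_abs_le_mul_add [RegularSpace X] [LocallyCompactSpace X]
    {g h : C(X, ℝ)} (hh : 0 ≤ h) (hgh : g =o[cocompact X] h) {ε : ℝ} (hε : 0 < ε) :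
    ∃ f : C_c(X, ℝ), ∀ x, |g x| ≤ ε * h x + f x := by
  obtain ⟨K, hK, hKg⟩ := mem_cocompact.1 (hgh.def hε)
  obtain ⟨f, hfK, hf, -⟩ := exists_compactlySupported_eqOn_le (abs_nonneg g) hK
  refine ⟨f, fun x ↦ ?_⟩
  by_cases hx : x ∈ K
  · rw [hfK hx]
    exact le_add_of_nonneg_left (mul_nonneg hε.le (hh x))
  · have hgx : |g x| ≤ ε * |h x| := hKg hx
    have hhx : 0 ≤ h x := hh x
    rw [abs_of_nonneg hhx] at hgx
    exact hgx.trans (le_add_of_nonneg_right (hf x))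

namespace IsAdapted

variable {E : Submodule ℝ C(X, ℝ)}

lemma eq_zero_of_eq_zero_on_compactlySupported [RegularSpace X] [LocallyCompactSpace X]
    (hE : IsAdapted E) (D : E →ₚ[ℝ] ℝ) (hD : ∀ f : C_c(X, ℝ), D ⟨f, hE.coe_mem f⟩ = 0) (g : E) :
    D g = 0 := by
  obtain ⟨h, hhE, hh, hgh⟩ := hE.exists_isLittleO g g.2
  have bound (ε : ℝ) (hε : 0 < ε) : |D g| ≤ ε * D ⟨h, hhE⟩ := by
    obtain ⟨f, hf⟩ := exists_compactlySupported_abs_le_mul_add hh hgh hε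
    let u : E := ε • ⟨h, hhE⟩ + ⟨f, hE.coe_mem f⟩
    have hu : D u = ε * D ⟨h, hhE⟩ := by
      rw [map_add, map_smul, hD, add_zero, smul_eq_mul]
    have hgu : g ≤ u := fun x ↦ (abs_le.1 (hf x)).2
    have hug : -u ≤ g := fun x ↦ (abs_le.1 (hf x)).1
    rw [← hu, abs_le, ← map_neg]
    exact ⟨OrderHomClass.mono D hug, OrderHomClass.mono D hgu⟩
  have hlim : Tendsto (fun ε : ℝ ↦ ε * D ⟨h, hhE⟩) (𝓝[>] 0) (𝓝 0) := by
    simpa using ((tendsto_id (x := 𝓝 (0 : ℝ))).mul_const (D ⟨h, hhE⟩)).mono_left nhdsWithin_le_nhds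
  exact abs_nonpos_iff.1 (ge_of_tendsto hlim (eventually_mem_nhdsWithin.mono bound))

variable [T2Space X] [LocallyCompactSpace X] [SigmaCompactSpace X] [MeasurableSpace X]
  [BorelSpace X] {L : E →ₚ[ℝ] ℝ} {m : Measure X} [IsFiniteMeasureOnCompacts m]

lemma lintegral_ofReal_le (hE : IsAdapted E)
    (hm : ∀ f : C_c(X, ℝ), ∫ x, f x ∂m = L ⟨f, hE.coe_mem f⟩) {h : E} (hh : 0 ≤ h) :
    ∫⁻ x, ENNReal.ofReal (h.1 x) ∂m ≤ ENNReal.ofReal (L h) := by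
  rw [← setLIntegral_univ, ← iUnion_compactCovering X,
    setLIntegral_iUnion_of_directed _ (Monotone.directed_le fun _ _ h ↦ compactCovering_subset X h)]
  refine iSup_le fun n ↦ ?_
  obtain ⟨f, hfK, hf, hfh⟩ :=
    exists_compactlySupported_eqOn_le (h := h.1) hh (isCompact_compactCovering X n)
  have hfint : Integrable f m := f.continuous.integrable_of_hasCompactSupport f.hasCompactSupport
  have hfL : (⟨f, hE.coe_mem f⟩ : E) ≤ h := fun x ↦ hfh x
  calc
    ∫⁻ x in compactCovering X n, ENNReal.ofReal (h.1 x) ∂m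
      = ∫⁻ x in compactCovering X n, ENNReal.ofReal (f x) ∂m :=
        setLIntegral_congr_fun (isCompact_compactCovering X n).measurableSet
          fun x hx ↦ by rw [hfK hx]
    _ ≤ ∫⁻ x, ENNReal.ofReal (f x) ∂m := setLIntegral_le_lintegral _ _
    _ = ENNReal.ofReal (L ⟨f, hE.coe_mem f⟩) := by
        rw [← hm, ofReal_integral_eq_lintegral_ofReal hfint (Eventually.of_forall hf)]
    _ ≤ ENNReal.ofReal (L h) := ENNReal.ofReal_le_ofReal (OrderHomClass.mono L hfL)

lemma integrable_of_nonneg (hE : IsAdapted E)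
    (hm : ∀ f : C_c(X, ℝ), ∫ x, f x ∂m = L ⟨f, hE.coe_mem f⟩) {h : E} (hh : 0 ≤ h) :
    Integrable h.1 m :=
  (lintegral_ofReal_ne_top_iff_integrable h.1.continuous.aestronglyMeasurable
    (Eventually.of_forall hh)).1 ((hE.lintegral_ofReal_le hm hh).trans_lt ENNReal.ofReal_lt_top).ne

lemma integral_le_of_nonneg (hE : IsAdapted E)
    (hm : ∀ f : C_c(X, ℝ), ∫ x, f x ∂m = L ⟨f, hE.coe_mem f⟩) {h : E} (hh : 0 ≤ h) :
    ∫ x, h.1 x ∂m ≤ L h := by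
  have hLh : 0 ≤ L h := by simpa using OrderHomClass.mono L hh
  rw [← ENNReal.ofReal_le_ofReal_iff hLh,
    ofReal_integral_eq_lintegral_ofReal (hE.integrable_of_nonneg hm hh) (Eventually.of_forall hh)]
  exact hE.lintegral_ofReal_le hm hh

lemma integrable (hE : IsAdapted E)
    (hm : ∀ f : C_c(X, ℝ), ∫ x, f x ∂m = L ⟨f, hE.coe_mem f⟩) (g : E) : Integrable g.1 m := by
  obtain ⟨h, hhE, hh, hgh⟩ := hE.exists_isLittleO g g.2
  obtain ⟨f, hf⟩ := exists_compactlySupported_abs_le_mul_add hh hgh one_pos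
  refine Integrable.mono' (((hE.integrable_of_nonneg hm (h := ⟨h, hhE⟩) hh).const_mul 1).add
    (f.continuous.integrable_of_hasCompactSupport f.hasCompactSupport))
    g.1.continuous.aestronglyMeasurable (Eventually.of_forall hf)

theorem exists_measure_integral_eq (hE : IsAdapted E) (L : E →ₚ[ℝ] ℝ) :
    ∃ m : Measure X, ∀ g : E, Integrable g.1 m ∧ ∫ x, g.1 x ∂m = L g := by
  let ι : C_c(X, ℝ) →ₗ[ℝ] E :=
    { toFun := fun f ↦ ⟨f, hE.coe_mem f⟩
      map_add' := fun _ _ ↦ rfl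
      map_smul' := fun _ _ ↦ rfl }
  let Λ : C_c(X, ℝ) →ₚ[ℝ] ℝ := .mk₀ (L.toLinearMap ∘ₗ ι) fun f hf ↦ by
    simpa using OrderHomClass.mono L (show (0 : E) ≤ ι f from hf)
  let m := RealRMK.rieszMeasure Λ
  have : m.Regular := RealRMK.regular_rieszMeasure Λ
  have hm (f : C_c(X, ℝ)) : ∫ x, f x ∂m = L ⟨f, hE.coe_mem f⟩ := RealRMK.integral_rieszMeasure Λ f
  have hint (g : E) : Integrable g.1 m := hE.integrable hm g
  let I : E →ₗ[ℝ] ℝ :=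
    { toFun := fun g ↦ ∫ x, g.1 x ∂m
      map_add' := fun g h ↦ integral_add (hint g) (hint h)
      map_smul' := fun c g ↦ integral_const_mul c g.1 }
  let D : E →ₚ[ℝ] ℝ := .mk₀ (L.toLinearMap - I) fun h hh ↦
    sub_nonneg.2 (hE.integral_le_of_nonneg hm hh)
  refine ⟨m, fun g ↦ ⟨hint g, ?_⟩⟩
  have hD : L g - ∫ x, g.1 x ∂m = 0 :=
    hE.eq_zero_of_eq_zero_on_compactlySupported D (fun f ↦ sub_eq_zero.2 (hm f).symm) g
  exact (sub_eq_zero.1 hD).symm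

end IsAdapted

end Adapted

section Determinacy

open Polynomial Asymptotics

/-- A probability measure on `ℝ` is moment-determinate if no other probability measure with
finite absolute moments has the same moments. -/
def IsMomentDeterminate (ρ : Measure ℝ) : Prop :=
  ∀ ρ' : Measure ℝ, IsProbabilityMeasure ρ' → (∀ m : ℕ, Integrable (fun t => |t| ^ m) ρ') →
    (∀ m : ℕ, (∫ t, t ^ m ∂ρ') = ∫ t, t ^ m ∂ρ) → ρ' = ρ

/-- The continuous functions on `ℝ` of at most polynomial growth. -/
def polynomialGrowth : Submodule ℝ C(ℝ, ℝ) where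
  carrier := {g | ∃ q : ℝ[X], ∀ x, |g x| ≤ q.eval x}
  add_mem' := by
    rintro f g ⟨p, hp⟩ ⟨q, hq⟩
    exact ⟨p + q, fun x ↦ by simpa using (abs_add_le _ _).trans (add_le_add (hp x) (hq x))⟩
  zero_mem' := ⟨0, by simp⟩
  smul_mem' := by
    rintro c g ⟨q, hq⟩
    exact ⟨C |c| * q, fun x ↦ by
      simpa [abs_mul] using mul_le_mul_of_nonneg_left (hq x) (abs_nonneg c)⟩

lemma toContinuousMap_mem_polynomialGrowth (q : ℝ[X]) : q.toContinuousMap ∈ polynomialGrowth := by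
  refine ⟨1 + q ^ 2, fun x ↦ ?_⟩
  simp only [toContinuousMap_apply, eval_add, eval_one, eval_pow]
  nlinarith [sq_abs (q.eval x), sq_nonneg (|q.eval x| - 1)]

/-- Polynomials as functions of polynomial growth. -/
noncomputable def polynomialToGrowth : ℝ[X] →ₗ[ℝ] polynomialGrowth :=
  toContinuousMapAlgHom.toLinearMap.codRestrict polynomialGrowth
    toContinuousMap_mem_polynomialGrowth

lemma isAdapted_polynomialGrowth : IsAdapted polynomialGrowth where
  coe_mem f := by
    obtain ⟨c, hc⟩ := f.hasCompactSupport.exists_bound_of_continuous f.continuous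
    exact ⟨C c, fun x ↦ by simpa using hc x⟩
  exists_isLittleO := by
    rintro g ⟨q, hq⟩
    have hq0 (x : ℝ) : 0 ≤ q.eval x := (abs_nonneg _).trans (hq x)
    refine ⟨((1 + X ^ 2) * q).toContinuousMap, toContinuousMap_mem_polynomialGrowth _,
      fun x ↦ ?_, ?_⟩
    · simpa using mul_nonneg (by positivity) (hq0 x)
    have hlittle : (fun _ ↦ 1 : ℝ → ℝ) =o[cocompact ℝ] fun x ↦ 1 + x ^ 2 := by
      refine (isLittleO_one_left_iff ℝ).2 (tendsto_atTop_mono (fun x ↦ ?_)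
        (tendsto_norm_cocompact_atTop (E := ℝ)))
      have hx : (0 : ℝ) ≤ 1 + x ^ 2 := by positivity
      rw [Real.norm_of_nonneg hx, Real.norm_eq_abs]
      nlinarith [sq_abs x, sq_nonneg (|x| - 1)]
    have hg : g =O[cocompact ℝ] fun x ↦ q.eval x :=
      IsBigO.of_bound' (Eventually.of_forall fun x ↦ (hq x).trans (le_abs_self _))
    refine (hlittle.mul_isBigO hg).congr (fun x ↦ one_mul _) fun x ↦ ?_
    simp

lemma integrable_eval_of_integrable_abs_pow {ρ : Measure ℝ}
    (hρ : ∀ m : ℕ, Integrable (fun t => |t| ^ m) ρ) (q : ℝ[X]) :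
    Integrable (fun t ↦ q.eval t) ρ := by
  simp only [eval_eq_sum_range]
  refine integrable_finsetSum _ fun m _ ↦ ((hρ m).mono' ?_ ?_).const_mul _
  · exact (continuous_pow m).aestronglyMeasurable
  · exact Eventually.of_forall fun t ↦ by simp

lemma integrable_of_mem_polynomialGrowth {ρ : Measure ℝ}
    (hρ : ∀ m : ℕ, Integrable (fun t => |t| ^ m) ρ) {g : C(ℝ, ℝ)} (hg : g ∈ polynomialGrowth) :
    Integrable g ρ := by
  obtain ⟨q, hq⟩ := hg
  exact (integrable_eval_of_integrable_abs_pow hρ q).mono' g.continuous.aestronglyMeasurable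
    (Eventually.of_forall hq)

namespace IsMomentDeterminate

variable {ρ : Measure ℝ} [IsProbabilityMeasure ρ]

theorem apply_eq_integral (hdet : IsMomentDeterminate ρ) (L : polynomialGrowth →ₚ[ℝ] ℝ)
    (hL : ∀ q : ℝ[X], L (polynomialToGrowth q) = ∫ t, q.eval t ∂ρ) (g : polynomialGrowth) :
    L g = ∫ t, g.1 t ∂ρ := by
  obtain ⟨m, hm⟩ := isAdapted_polynomialGrowth.exists_measure_integral_eq L
  have hmq (q : ℝ[X]) : Integrable (fun t ↦ q.eval t) m ∧
      ∫ t, q.eval t ∂m = ∫ t, q.eval t ∂ρ := by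
    rw [← hL]
    exact hm (polynomialToGrowth q)
  have hprob : IsProbabilityMeasure m := by
    rw [isProbabilityMeasure_iff_real]
    simpa using (hmq 1).2
  have hmρ : m = ρ := by
    refine hdet m hprob (fun k ↦ ?_) fun k ↦ by simpa using (hmq (X ^ k)).2
    simpa using (hmq (X ^ k)).1.norm
  rw [← (hm g).2, hmρ]

-- Otherwise `∫ · ∂ρ` on polynomials would have a second positive extension to `polynomialGrowth`.
theorem exists_le_eval_integral_lt (hdet : IsMomentDeterminate ρ)
    (hρ : ∀ m : ℕ, Integrable (fun t => |t| ^ m) ρ) {g : C(ℝ, ℝ)} (hg : g ∈ polynomialGrowth)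
    {ε : ℝ} (hε : 0 < ε) :
    ∃ q : ℝ[X], (∀ t, g t ≤ q.eval t) ∧ ∫ t, q.eval t ∂ρ < ∫ t, g t ∂ρ + ε := by
  by_contra! hlow
  let s : PointedCone ℝ polynomialGrowth :=
    (PointedCone.positive ℝ C(ℝ, ℝ)).comap polynomialGrowth.subtype
  let I : polynomialGrowth →ₗ[ℝ] ℝ :=
    { toFun := fun h ↦ ∫ t, h.1 t ∂ρ
      map_add' := fun h k ↦ integral_add (integrable_of_mem_polynomialGrowth hρ h.2)
        (integrable_of_mem_polynomialGrowth hρ k.2)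
      map_smul' := fun c h ↦ integral_const_mul c h.1 }
  let f := I.toPMap (LinearMap.range polynomialToGrowth)
  obtain ⟨L, hLf, hLs, hLg⟩ := exists_nonneg_extension_le_apply s f
    (fun h hh ↦ integral_nonneg hh)
    (fun h ↦ by
      obtain ⟨q, hq⟩ := h.2
      exact ⟨⟨polynomialToGrowth q, q, rfl⟩, fun t ↦ neg_le_iff_add_nonneg.1
        (neg_le.1 (abs_le.1 (hq t)).1)⟩)
    (x₀ := ⟨g, hg⟩) (c := ∫ t, g t ∂ρ + ε) (by
      rintro ⟨_, q, rfl⟩ hq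
      exact hlow q fun t ↦ sub_nonneg.1 (hq t))
  have hL : L ⟨g, hg⟩ = ∫ t, g t ∂ρ :=
    hdet.apply_eq_integral (.mk₀ L hLs) (fun q ↦ hLf ⟨_, q, rfl⟩) ⟨g, hg⟩
  linarith

lemma exists_eLpNorm_inv_sub_I_sub_eval_le (hdet : IsMomentDeterminate ρ)
    (hρ : ∀ m : ℕ, Integrable (fun t => |t| ^ m) ρ) {ε : ℝ} (hε : 0 < ε) :
    ∃ q : ℂ[X], eLpNorm (fun t : ℝ ↦ ((t : ℂ) - Complex.I)⁻¹ - q.eval (t : ℂ)) 2 ρ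
      ≤ ENNReal.ofReal ε := by
  let u : C(ℝ, ℝ) := ⟨fun t ↦ -(1 + t ^ 2)⁻¹, by fun_prop (disch := intro; positivity)⟩
  have hu : u ∈ polynomialGrowth := ⟨1, fun t ↦ by
    simpa [u, abs_of_nonneg (show 0 ≤ 1 + t ^ 2 by positivity)] using
      inv_le_one_of_one_le₀ (le_add_of_nonneg_right (sq_nonneg t))⟩
  obtain ⟨p, hup, hpε⟩ := hdet.exists_le_eval_integral_lt hρ hu (pow_pos hε 2)
  obtain ⟨q, hq⟩ := exists_norm_inv_sub_I_sub_eval_sq_le (p := -p) fun t ↦ by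
    simpa using neg_le.1 (hup t)
  refine ⟨q, ?_⟩
  have hint : Integrable (fun t ↦ p.eval t - u t) ρ :=
    (integrable_eval_of_integrable_abs_pow hρ p).sub (integrable_of_mem_polynomialGrowth hρ hu)
  rw [← ENNReal.pow_le_pow_left_iff two_ne_zero, ← ENNReal.ofReal_pow hε.le]
  calc
    eLpNorm (fun t : ℝ ↦ ((t : ℂ) - Complex.I)⁻¹ - q.eval (t : ℂ)) 2 ρ ^ 2
      = ∫⁻ t : ℝ, ‖((t : ℂ) - Complex.I)⁻¹ - q.eval (t : ℂ)‖ₑ ^ 2 ∂ρ := by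
        simpa using eLpNorm_nnreal_pow_eq_lintegral (p := 2) (μ := ρ)
          (f := fun t : ℝ ↦ ((t : ℂ) - Complex.I)⁻¹ - q.eval (t : ℂ)) two_ne_zero
    _ ≤ ∫⁻ t, ENNReal.ofReal (p.eval t - u t) ∂ρ := by
        refine lintegral_mono fun t ↦ ?_
        rw [← ofReal_norm, ← ENNReal.ofReal_pow (norm_nonneg _)]
        refine ENNReal.ofReal_le_ofReal ((hq t).trans_eq ?_)
        simp only [u, eval_neg, ContinuousMap.coe_mk]
        ring
    _ = ENNReal.ofReal (∫ t, p.eval t - u t ∂ρ) :=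
        (ofReal_integral_eq_lintegral_ofReal hint
          (Eventually.of_forall fun t ↦ sub_nonneg.2 (hup t))).symm
    _ ≤ ENNReal.ofReal (ε ^ 2) := by
        rw [integral_sub (integrable_eval_of_integrable_abs_pow hρ p)
          (integrable_of_mem_polynomialGrowth hρ hu)]
        exact ENNReal.ofReal_le_ofReal (by linarith)

theorem exists_tendsto_eLpNorm_inv_sub_I_sub_eval (hdet : IsMomentDeterminate ρ)
    (hρ : ∀ m : ℕ, Integrable (fun t => |t| ^ m) ρ) :
    ∃ q : ℕ → ℂ[X], Tendsto
      (fun n ↦ eLpNorm (fun t : ℝ ↦ ((t : ℂ) - Complex.I)⁻¹ - (q n).eval (t : ℂ)) 2 ρ)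
      atTop (𝓝 0) := by
  choose q hq using fun n : ℕ ↦
    hdet.exists_eLpNorm_inv_sub_I_sub_eval_le hρ (Nat.one_div_pos_of_nat (α := ℝ) (n := n))
  refine ⟨q, tendsto_of_tendsto_of_tendsto_of_le_of_le tendsto_const_nhds ?_ (fun _ ↦ zero_le) hq⟩
  simpa using ENNReal.tendsto_ofReal (tendsto_one_div_add_atTop_nhds_zero_nat (𝕜 := ℝ))

end IsMomentDeterminate

lemma map_eq_map_of_isMomentDeterminate {α : Type*} {mα : MeasurableSpace α} {μ ν : Measure α}
    [IsProbabilityMeasure ν] {g : α → ℝ} (hg : Measurable g)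
    (hν : ∀ m : ℕ, Integrable (fun x ↦ |g x| ^ m) ν)
    (hmom : ∀ m : ℕ, ∫ x, g x ^ m ∂μ = ∫ x, g x ^ m ∂ν) (hdet : IsMomentDeterminate (μ.map g)) :
    ν.map g = μ.map g := by
  refine hdet _ (Measure.isProbabilityMeasure_map hg.aemeasurable) (fun m ↦ ?_) fun m ↦ ?_
  · exact (integrable_map_measure (by fun_prop) hg.aemeasurable).2 (hν m)
  · rw [integral_map hg.aemeasurable (by fun_prop), integral_map hg.aemeasurable (by fun_prop),
      hmom]

end Determinacy

section Multipliers

open BoundedContinuousFunction ComplexConjugate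

lemma tendsto_integral_mul_of_tendsto_eLpNorm {α ι 𝕜 : Type*} [NormedRing 𝕜] [NormedSpace ℝ 𝕜]
    {mα : MeasurableSpace α} {μ : Measure α} {p q : ℝ≥0∞} [p.HolderTriple q 1] {l : Filter ι}
    {f g : α → 𝕜} {F : ι → α → 𝕜} (hf : AEStronglyMeasurable f μ) (hF : ∀ n, MemLp (F n) p μ)
    (hg : MemLp g q μ) (hlim : Tendsto (fun n ↦ eLpNorm (f - F n) p μ) l (𝓝 0)) :
    Tendsto (fun n ↦ ∫ x, F n x * g x ∂μ) l (𝓝 (∫ x, f x * g x ∂μ)) := by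
  refine tendsto_integral_of_L1' _ (hf.mul hg.1)
    (Eventually.of_forall fun n ↦ (hF n).integrable_mul hg) ?_
  refine tendsto_of_tendsto_of_tendsto_of_le_of_le tendsto_const_nhds
    (h := fun n ↦ eLpNorm (f - F n) p μ * eLpNorm g q μ) ?_ (fun _ ↦ zero_le) fun n ↦ ?_
  · simpa using ENNReal.Tendsto.mul_const hlim (Or.inr hg.eLpNorm_ne_top)
  · have hsmul : (fun x ↦ F n x * g x) - f * g = (F n - f) • g := (sub_mul (F n) f g).symm
    simp only [hsmul, eLpNorm_sub_comm f]
    exact eLpNorm_smul_le_mul_eLpNorm hg.1 ((hF n).1.sub hf)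

variable {X : Type*} [TopologicalSpace X] [MeasurableSpace X] [BorelSpace X]
  {S : StarSubalgebra ℂ C(X, ℂ)} {μ ν : Measure X}

lemma memLp_two_of_mem_starSubalgebra (hint : ∀ P ∈ S, Integrable P μ) {P : C(X, ℂ)}
    (hP : P ∈ S) : MemLp P 2 μ := by
  rw [memLp_two_iff_integrable_sq_norm P.continuous.aestronglyMeasurable]
  simpa [pow_two] using (hint _ (mul_mem (star_mem hP) hP)).norm

/-- Two measures agree on a star-algebra `S` of continuous functions if these are integrable with
the same integral for both; for `S` the polynomials this means having the same moments. -/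
structure AgreeOn (S : StarSubalgebra ℂ C(X, ℂ)) (μ ν : Measure X) : Prop where
  integrable_left : ∀ P ∈ S, Integrable P μ
  integrable_right : ∀ P ∈ S, Integrable P ν
  integral_eq : ∀ P ∈ S, ∫ x, P x ∂μ = ∫ x, P x ∂ν

namespace AgreeOn

/-- The bounded functions `G` such that `μ` and `ν` agree on `G * P` for all `P` in `S`. -/
def weights (h : AgreeOn S μ ν) : Submodule ℂ (X →ᵇ ℂ) where
  carrier := {G | ∀ P ∈ S, ∫ x, G x * P x ∂μ = ∫ x, G x * P x ∂ν}
  add_mem' {G H} hG hH P hP := by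
    have hint (ρ : Measure X) (hρ : Integrable P ρ) (K : X →ᵇ ℂ) :
        Integrable (fun x ↦ K x * P x) ρ :=
      hρ.bdd_mul K.continuous.aestronglyMeasurable (Eventually.of_forall K.norm_coe_le_norm)
    have hμ := hint μ (h.integrable_left P hP)
    have hν := hint ν (h.integrable_right P hP)
    simp only [BoundedContinuousFunction.add_apply, add_mul]
    rw [integral_add (hμ G) (hμ H), integral_add (hν G) (hν H), hG P hP, hH P hP]
  zero_mem' P _ := by simp
  smul_mem' c G hG P hP := by
    simp only [BoundedContinuousFunction.smul_apply, smul_eq_mul, mul_assoc, integral_const_mul,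
      hG P hP]

lemma one_mem_weights (h : AgreeOn S μ ν) : 1 ∈ h.weights := fun P hP ↦ by
  simpa using h.integral_eq P hP

lemma star_mem_weights (h : AgreeOn S μ ν) {G : X →ᵇ ℂ} (hG : G ∈ h.weights) :
    star G ∈ h.weights := fun P hP ↦ by
  have hconj (x : X) : (star G) x * P x = conj (G x * (star P) x) := by simp
  simp only [hconj, integral_conj]
  exact congrArg _ (hG _ (star_mem hP))

/-- The bounded functions multiplication by which preserves `AgreeOn.weights`. -/
def multipliers (h : AgreeOn S μ ν) : StarSubalgebra ℂ (X →ᵇ ℂ) where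
  carrier := {φ | ∀ G ∈ h.weights, φ * G ∈ h.weights}
  mul_mem' hφ hψ G hG := by simpa only [mul_assoc] using hφ _ (hψ G hG)
  add_mem' hφ hψ G hG := by simpa only [add_mul] using add_mem (hφ G hG) (hψ G hG)
  algebraMap_mem' c G hG := by
    simpa only [Algebra.algebraMap_eq_smul_one, smul_one_mul] using h.weights.smul_mem c hG
  star_mem' {φ} hφ G hG := by
    simpa only [star_mul', star_star] using h.star_mem_weights (hφ _ (h.star_mem_weights hG))

lemma mem_weights_of_mem_multipliers (h : AgreeOn S μ ν) {φ : X →ᵇ ℂ} (hφ : φ ∈ h.multipliers) :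
    φ ∈ h.weights := by
  simpa using hφ 1 h.one_mem_weights

theorem mem_multipliers_of_tendsto (h : AgreeOn S μ ν) {φ : X →ᵇ ℂ} {p : ℕ → C(X, ℂ)}
    (hp : ∀ n, p n ∈ S) (hμ : Tendsto (fun n ↦ eLpNorm (⇑φ - ⇑(p n)) 2 μ) atTop (𝓝 0))
    (hν : Tendsto (fun n ↦ eLpNorm (⇑φ - ⇑(p n)) 2 ν) atTop (𝓝 0)) : φ ∈ h.multipliers := by
  intro G hG P hP
  have hlim (ρ : Measure X) (hint : ∀ P ∈ S, Integrable P ρ)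
      (hρ : Tendsto (fun n ↦ eLpNorm (⇑φ - ⇑(p n)) 2 ρ) atTop (𝓝 0)) :
      Tendsto (fun n ↦ ∫ x, G x * (p n * P) x ∂ρ) atTop (𝓝 (∫ x, (φ * G) x * P x ∂ρ)) := by
    have hGP : MemLp (⇑G * ⇑P) 2 ρ :=
      (memLp_two_of_mem_starSubalgebra hint hP).mul (p := ⊤) G.memLp_top
    simpa only [Pi.mul_apply, ContinuousMap.mul_apply, BoundedContinuousFunction.mul_apply,
      mul_assoc, mul_left_comm] using
      tendsto_integral_mul_of_tendsto_eLpNorm φ.continuous.aestronglyMeasurable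
        (fun n ↦ memLp_two_of_mem_starSubalgebra hint (hp n)) hGP hρ
  refine tendsto_nhds_unique (hlim μ h.integrable_left hμ) ?_
  simpa only [hG _ (mul_mem (hp _) hP)] using hlim ν h.integrable_right hν

theorem measure_eq [PolishSpace X] [IsFiniteMeasure μ] [IsFiniteMeasure ν] (h : AgreeOn S μ ν)
    (hsep : ∀ x y, x ≠ y → ∃ φ ∈ h.multipliers, φ x ≠ φ y) : μ = ν := by
  refine ext_of_forall_mem_subalgebra_integral_eq_of_polish (𝕜 := ℂ) (A := h.multipliers) ?_ ?_
  · intro x y hxy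
    obtain ⟨φ, hφ, hφxy⟩ := hsep x y hxy
    exact ⟨φ, ⟨_, ⟨φ, hφ, rfl⟩, rfl⟩, hφxy⟩
  · intro φ hφ
    simpa using h.mem_weights_of_mem_multipliers hφ 1 (one_mem S)

end AgreeOn

end Multipliers

section Petersen

open BoundedContinuousFunction Polynomial

variable {X ι : Type*} [TopologicalSpace X]

/-- The star-algebra of complex polynomials in the real functions `f i`. -/
noncomputable def polynomialsIn (f : ι → C(X, ℝ)) : StarSubalgebra ℂ C(X, ℂ) :=
  StarAlgebra.adjoin ℂ (Set.range fun i ↦ (f i).realToRCLike ℂ)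

lemma exists_mem_polynomialsIn_eq_eval (f : ι → C(X, ℝ)) (i : ι) (q : ℂ[X]) :
    ∃ P ∈ polynomialsIn f, ∀ x, P x = q.eval (f i x : ℂ) := by
  have hi : (f i).realToRCLike ℂ ∈ polynomialsIn f := StarAlgebra.subset_adjoin ℂ _ ⟨i, rfl⟩
  exact ⟨aeval ((f i).realToRCLike ℂ) q,
    Algebra.adjoin_le (Set.singleton_subset_iff.2 hi) (aeval_mem_adjoin_singleton ℂ _),
    aeval_continuousMap_apply q _⟩

lemma toSubmodule_polynomialsIn (f : ι → C(X, ℝ)) :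
    Subalgebra.toSubmodule (polynomialsIn f).toSubalgebra = Submodule.span ℂ
      (Set.range fun α : ι →₀ ℕ ↦ (α.prod fun i k ↦ f i ^ k).realToRCLike ℂ) := by
  have hstar : star (Set.range fun i ↦ (f i).realToRCLike ℂ) ⊆
      Set.range fun i ↦ (f i).realToRCLike ℂ := by
    rintro P ⟨i, hi⟩
    have hself : IsSelfAdjoint ((f i).realToRCLike ℂ) := ContinuousMap.isSelfAdjoint_realToRCLike ℂ
    exact ⟨i, hself.star_eq.symm.trans (star_eq_iff_star_eq.2 hi.symm)⟩
  have hmonomials : (Submonoid.closure (Set.range fun i ↦ (f i).realToRCLike ℂ) : Set C(X, ℂ)) =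
      Set.range fun α : ι →₀ ℕ ↦ (α.prod fun i k ↦ f i ^ k).realToRCLike ℂ := by
    ext P
    have hprod (α : ι →₀ ℕ) : (α.prod fun i k ↦ f i ^ k).realToRCLike ℂ =
        α.prod fun i k ↦ (f i).realToRCLike ℂ ^ k := by
      ext x
      simp [Finsupp.prod]
    simp only [SetLike.mem_coe, Submonoid.mem_closure_range_iff, Set.mem_range, hprod, eq_comm]
  rw [polynomialsIn, StarAlgebra.adjoin_toSubalgebra, Set.union_eq_self_of_subset_right hstar,
    Algebra.adjoin_eq_span, hmonomials]

variable [MeasurableSpace X] [BorelSpace X] {μ ν : Measure X} {f : ι → C(X, ℝ)}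

lemma agreeOn_polynomialsIn
    (hμ : ∀ α : ι →₀ ℕ, Integrable (fun x ↦ α.prod fun i k ↦ |f i x| ^ k) μ)
    (hν : ∀ α : ι →₀ ℕ, Integrable (fun x ↦ α.prod fun i k ↦ |f i x| ^ k) ν)
    (hmom : ∀ α : ι →₀ ℕ,
      ∫ x, α.prod (fun i k ↦ f i x ^ k) ∂μ = ∫ x, α.prod (fun i k ↦ f i x ^ k) ∂ν) :
    AgreeOn (polynomialsIn f) μ ν := by
  have hmonomial (α : ι →₀ ℕ) (x : X) : ((α.prod fun i k ↦ f i ^ k).realToRCLike ℂ) x =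
      ((α.prod fun i k ↦ f i x ^ k : ℝ) : ℂ) := by
    simp [Finsupp.prod]
  have hint (ρ : Measure X) (α : ι →₀ ℕ)
      (hρ : Integrable (fun x ↦ α.prod fun i k ↦ |f i x| ^ k) ρ) :
      Integrable ((α.prod fun i k ↦ f i ^ k).realToRCLike ℂ) ρ :=
    hρ.mono' (ContinuousMap.continuous _).aestronglyMeasurable
      (Eventually.of_forall fun x ↦ by simp [Finsupp.prod])
  have key (P : C(X, ℂ)) (hP : P ∈ polynomialsIn f) :
      Integrable P μ ∧ Integrable P ν ∧ ∫ x, P x ∂μ = ∫ x, P x ∂ν := by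
    rw [← StarSubalgebra.mem_toSubalgebra, ← Subalgebra.mem_toSubmodule,
      toSubmodule_polynomialsIn] at hP
    induction hP using Submodule.span_induction with
    | mem P hP =>
      obtain ⟨α, rfl⟩ := hP
      refine ⟨hint μ α (hμ α), hint ν α (hν α), ?_⟩
      simp only [hmonomial, integral_complex_ofReal, hmom]
    | zero => exact ⟨integrable_zero _ _ _, integrable_zero _ _ _, by simp⟩
    | add P Q _ _ hP hQ =>
      refine ⟨hP.1.add hQ.1, hP.2.1.add hQ.2.1, ?_⟩
      simp only [ContinuousMap.add_apply]
      rw [integral_add hP.1 hQ.1, integral_add hP.2.1 hQ.2.1, hP.2.2, hQ.2.2]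
    | smul c P _ hP =>
      refine ⟨hP.1.smul c, hP.2.1.smul c, ?_⟩
      simp only [ContinuousMap.smul_apply, integral_smul, hP.2.2]
  exact ⟨fun P hP ↦ (key P hP).1, fun P hP ↦ (key P hP).2.1, fun P hP ↦ (key P hP).2.2⟩

/-- The bounded function `t ↦ (t - i)⁻¹` on the real line. -/
noncomputable def invSubI : ℝ →ᵇ ℂ :=
  .ofNormedAddCommGroup (fun t : ℝ ↦ ((t : ℂ) - Complex.I)⁻¹)
    (Continuous.inv₀ (by fun_prop) fun t h ↦ by simpa using congrArg Complex.im h) 1 fun t ↦ by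
      rw [norm_inv]
      exact inv_le_one_of_one_le₀ (by simpa using Complex.abs_im_le_norm ((t : ℂ) - Complex.I))

lemma invSubI_injective : Function.Injective invSubI := fun s t hst ↦ by
  simpa using inv_injective (show ((s : ℂ) - Complex.I)⁻¹ = ((t : ℂ) - Complex.I)⁻¹ from hst)

lemma compContinuous_invSubI_mem_multipliers [IsProbabilityMeasure μ]
    (h : AgreeOn (polynomialsIn f) μ ν) (i : ι) (hmap : ν.map (f i) = μ.map (f i))
    (hμ : ∀ m : ℕ, Integrable (fun x ↦ |f i x| ^ m) μ) (hdet : IsMomentDeterminate (μ.map (f i))) :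
    invSubI.compContinuous (f i) ∈ h.multipliers := by
  have hprob : IsProbabilityMeasure (μ.map (f i)) :=
    Measure.isProbabilityMeasure_map (f i).continuous.aemeasurable
  obtain ⟨q, hq⟩ := hdet.exists_tendsto_eLpNorm_inv_sub_I_sub_eval fun m ↦
    (integrable_map_measure (by fun_prop) (f i).continuous.aemeasurable).2 (hμ m)
  choose P hP hPq using fun n ↦ exists_mem_polynomialsIn_eq_eval f i (q n)
  have hlim (ρ : Measure X) (hρ : ρ.map (f i) = μ.map (f i)) :
      Tendsto (fun n ↦ eLpNorm (⇑(invSubI.compContinuous (f i)) - ⇑(P n)) 2 ρ) atTop (𝓝 0) := by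
    refine hq.congr fun n ↦ ?_
    have hcont : Continuous fun t : ℝ ↦ ((t : ℂ) - Complex.I)⁻¹ - (q n).eval (t : ℂ) :=
      invSubI.continuous.sub (by fun_prop)
    rw [← hρ, eLpNorm_map_measure hcont.aestronglyMeasurable (f i).continuous.aemeasurable]
    congr 1
    ext x
    exact congrArg _ (hPq n x).symm
  exact h.mem_multipliers_of_tendsto hP (hlim μ rfl) (hlim ν hmap)

theorem stmt10_general [PolishSpace X] [IsProbabilityMeasure μ] [IsProbabilityMeasure ν]
    (hf : Function.Injective fun x i ↦ f i x)
    (hμ : ∀ α : ι →₀ ℕ, Integrable (fun x ↦ α.prod fun i k ↦ |f i x| ^ k) μ)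
    (hν : ∀ α : ι →₀ ℕ, Integrable (fun x ↦ α.prod fun i k ↦ |f i x| ^ k) ν)
    (hmom : ∀ α : ι →₀ ℕ,
      ∫ x, α.prod (fun i k ↦ f i x ^ k) ∂μ = ∫ x, α.prod (fun i k ↦ f i x ^ k) ∂ν)
    (hdet : ∀ i, IsMomentDeterminate (μ.map (f i))) : μ = ν := by
  have hμi (i : ι) (m : ℕ) : Integrable (fun x ↦ |f i x| ^ m) μ := by
    simpa using hμ (.single i m)
  have hνi (i : ι) (m : ℕ) : Integrable (fun x ↦ |f i x| ^ m) ν := by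
    simpa using hν (.single i m)
  have hmap (i : ι) : ν.map (f i) = μ.map (f i) :=
    map_eq_map_of_isMomentDeterminate (f i).continuous.measurable (hνi i)
      (fun m ↦ by simpa using hmom (.single i m)) (hdet i)
  have hagree := agreeOn_polynomialsIn hμ hν hmom
  refine hagree.measure_eq fun x y hxy ↦ ?_
  obtain ⟨i, hi⟩ := Function.ne_iff.1 (hf.ne hxy)
  exact ⟨_, compContinuous_invSubI_mem_multipliers hagree i (hmap i) (hμi i) (hdet i),
    invSubI_injective.ne hi⟩

end Petersen

theorem stmt10 (d : ℕ) (μ ν : Measure (EuclideanSpace ℝ (Fin d)))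
    [IsProbabilityMeasure μ] [IsProbabilityMeasure ν]
    (hμ : ∀ α : Fin d → ℕ, Integrable (fun x => ∏ i, |x i| ^ α i) μ)
    (hν : ∀ α : Fin d → ℕ, Integrable (fun x => ∏ i, |x i| ^ α i) ν)
    (hmom : ∀ α : Fin d → ℕ,
      (∫ x, ∏ i, x i ^ α i ∂μ) = ∫ x, ∏ i, x i ^ α i ∂ν)
    (hdet : ∀ j : Fin d, ∀ ρ : Measure ℝ, IsProbabilityMeasure ρ →
      (∀ m : ℕ, Integrable (fun t => |t| ^ m) ρ) →
      (∀ m : ℕ, (∫ t, t ^ m ∂ρ) = ∫ t, t ^ m ∂(μ.map (fun x => x j))) →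
      ρ = μ.map (fun x => x j)) :
    μ = ν := by
  refine stmt10_general (f := fun j ↦ ⟨fun x ↦ x j, by fun_prop⟩) (WithLp.ofLp_injective 2)
    (fun α ↦ ?_) (fun α ↦ ?_) (fun α ↦ ?_) hdet <;>
    simp only [Finsupp.prod_pow, ContinuousMap.coe_mk]
  exacts [hμ α, hν α, hmom α]
end

section
/- Let P and Q be Borel probability measures on ℝ^d, let A ⊂ 𝕊^{d-1} be a Borel set with positive surface measure, and suppose π_u(Q) = π_u(P) for all u ∈ A. Assume there are linearly independent u_1,…,u_d ∈ A such that each π_{u_j}(P) has finite moments of all orders. Then for every m ≥ 1 and every u ∈ ℝ^d, ∫ ⟨u,x⟩^m dQ(x) = ∫ ⟨u,x⟩^m dP(x). -/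
open MeasureTheory Filter
open scoped InnerProductSpace ENNReal Topology BigOperators

/-!
Each moment difference `v ↦ ∫ ⟪v, x⟫ ^ m ∂Q - ∫ ⟪v, x⟫ ^ m ∂P` is the diagonal of a difference of
moment tensors, hence a real-analytic function whose zero set is a cone `Z`. Suppose that it does
not vanish at some `w ≠ 0`. On every line through `w` its zeros are isolated, so by Fubini (applied
to the lines in the affine hyperplane `w + wᗮ`) the set `Z ∩ (w + wᗮ)` is Lebesgue-null. Radial
projection of that hyperplane to the unit sphere is Lipschitz and, up to sign, carries
`Z ∩ (w + wᗮ)` onto all of `Z ∩ 𝕊` except the equator `wᗮ ∩ 𝕊`, which is null for dimension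
reasons. Hence `Z ∩ 𝕊` is null and cannot contain `A`.
-/

open Module NormedSpace

section AnalyticZeros

variable {E F : Type*} [NormedAddCommGroup E] [NormedSpace ℝ E] [FiniteDimensional ℝ E]
  [MeasurableSpace E] [BorelSpace E] [NormedAddCommGroup F] [NormedSpace ℝ F]

lemma ae_mem_of_forall_ae_add_smul_mem (μ : Measure E) [μ.IsAddHaarMeasure] {s : Set E}
    (hs : MeasurableSet s) (w : E) (h : ∀ x : E, ∀ᵐ r : ℝ, w + r • x ∈ s) :
    ∀ᵐ x ∂μ, x ∈ s := by
  have hmeas : MeasurableSet {p : E × ℝ | w + p.2 • p.1 ∈ s} :=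
    (by fun_prop : Measurable fun p : E × ℝ => w + p.2 • p.1) hs
  have hswap : ∀ᵐ r : ℝ, ∀ᵐ x ∂μ, w + r • x ∈ s :=
    (Measure.ae_ae_comm hmeas).1 (ae_of_all μ h)
  obtain ⟨r, hr, hr0⟩ := (hswap.and (Measure.ae_ne volume 0)).exists
  have hquasi : Measure.QuasiMeasurePreserving (fun x : E => r⁻¹ • (-w + x)) μ μ :=
    (Measure.quasiMeasurePreserving_smul μ (inv_ne_zero hr0)).comp
      (quasiMeasurePreserving_add_left μ (-w))
  filter_upwards [hquasi.ae hr] with x hx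
  simpa only [smul_inv_smul₀ hr0, add_neg_cancel_left] using hx

lemma measure_zeros_eq_zero_of_analyticOnNhd (μ : Measure E) [μ.IsAddHaarMeasure] {f : E → F}
    (hf : AnalyticOnNhd ℝ f Set.univ) {w : E} (hw : f w ≠ 0) : μ {x | f x = 0} = 0 := by
  have hcont : Continuous f := continuousOn_univ.1 hf.continuousOn
  have hopen : IsOpen {x | f x ≠ 0} := isOpen_ne_fun hcont continuous_const
  have hae : ∀ᵐ x ∂μ, x ∈ {x | f x ≠ 0} := by
    refine ae_mem_of_forall_ae_add_smul_mem μ hopen.measurableSet w fun x => ?_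
    have hline : AnalyticOnNhd ℝ (fun r : ℝ => f (w + r • x)) Set.univ := fun r _ =>
      (hf (w + r • x) trivial).fun_comp_of_eq (g := f) (f := fun r : ℝ => w + r • x)
        (by fun_prop) rfl
    have hcodisc := hline.preimage_zero_mem_codiscrete (x := 0) (by simpa using hw)
    have := ae_restrict_le_codiscreteWithin (μ := volume) MeasurableSet.univ hcodisc
    rwa [Measure.restrict_univ] at this
  simpa [ae_iff] using hae

end AnalyticZeros

section RadialProjection

variable {E : Type*} [NormedAddCommGroup E] [NormedSpace ℝ E]

lemma norm_mul_norm_normalize_sub_normalize_le (x y : E) :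
    ‖x‖ * ‖normalize x - normalize y‖ ≤ 2 * ‖x - y‖ := by
  have hdecomp : ‖x‖ • (normalize x - normalize y) = (x - y) + (‖y‖ - ‖x‖) • normalize y := by
    rw [smul_sub, sub_smul, norm_smul_normalize, norm_smul_normalize]
    abel
  have hunit : ‖normalize y‖ ≤ 1 := by
    rcases eq_or_ne y 0 with rfl | hy
    · simp
    · exact (norm_normalize hy).le
  calc ‖x‖ * ‖normalize x - normalize y‖
      = ‖(x - y) + (‖y‖ - ‖x‖) • normalize y‖ := by rw [← hdecomp, norm_smul, norm_norm]
    _ ≤ ‖x - y‖ + |‖y‖ - ‖x‖| * ‖normalize y‖ := by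
      rw [← Real.norm_eq_abs, ← norm_smul]
      exact norm_add_le _ _
    _ ≤ ‖x - y‖ + ‖x - y‖ * 1 := by
      rw [abs_sub_comm]
      gcongr
      exact abs_norm_sub_norm_le x y
    _ = 2 * ‖x - y‖ := by ring

lemma lipschitzOnWith_normalize {r : NNReal} (hr : 0 < r) :
    LipschitzOnWith (2 / r) (normalize : E → E) {x | r ≤ ‖x‖} := by
  refine LipschitzOnWith.of_dist_le_mul fun x hx y _ => ?_
  have hr' : (0 : ℝ) < r := hr
  rw [dist_eq_norm, dist_eq_norm, NNReal.coe_div, NNReal.coe_ofNat, div_mul_eq_mul_div,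
    le_div_iff₀' hr']
  calc r * ‖normalize x - normalize y‖ ≤ ‖x‖ * ‖normalize x - normalize y‖ := by
        gcongr
        exact hx
    _ ≤ 2 * ‖x - y‖ := norm_mul_norm_normalize_sub_normalize_le x y

end RadialProjection

section Cone

variable {E F : Type*} [NormedAddCommGroup E] [InnerProductSpace ℝ E]
  [NormedAddCommGroup F] [NormedSpace ℝ F]

lemma norm_le_norm_add_orthogonal (w : E) (y : (ℝ ∙ w)ᗮ) : ‖w‖ ≤ ‖w + y‖ := by
  have horth : ⟪w, (y : E)⟫_ℝ = 0 := Submodule.mem_orthogonal_singleton_iff_inner_right.1 y.2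
  have hpythagoras := norm_add_sq_eq_norm_sq_add_norm_sq_real horth
  refine (mul_self_le_mul_self_iff (norm_nonneg _) (norm_nonneg _)).2 ?_
  rw [hpythagoras]
  exact le_add_of_nonneg_right (mul_self_nonneg _)

/-- The gnomonic parametrization of the open hemisphere centred at `w / ‖w‖`: central projection of
the affine hyperplane `w + wᗮ`, coordinatized by `wᗮ`, to the unit sphere. -/
noncomputable def gnomonic (w : E) (y : (ℝ ∙ w)ᗮ) : E := normalize (w + y)

lemma lipschitzWith_gnomonic {w : E} (hw : w ≠ 0) : LipschitzWith (2 / ‖w‖₊) (gnomonic w) := by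
  have htranslate : LipschitzWith 1 fun y : (ℝ ∙ w)ᗮ => w + (y : E) :=
    ((isometry_add_left w).comp isometry_subtype_coe).lipschitz
  have hcomp := (lipschitzOnWith_normalize (nnnorm_pos.2 hw)).comp
    (htranslate.lipschitzOnWith (s := Set.univ)) fun y _ => norm_le_norm_add_orthogonal w y
  rwa [lipschitzOnWith_univ, mul_one] at hcomp

lemma cone_inter_sphere_subset_gnomonic_union {Z : Set E} (hZ : ∀ c : ℝ, ∀ x ∈ Z, c • x ∈ Z) {w : E}
    (hw : w ≠ 0) :
    Z ∩ Metric.sphere 0 1 ⊆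
      gnomonic w '' {y | w + (y : E) ∈ Z} ∪ -(gnomonic w '' {y | w + (y : E) ∈ Z}) ∪
        ((↑) : (ℝ ∙ w)ᗮ → E) '' Metric.sphere 0 1 := by
  rintro a ⟨haZ, haS⟩
  have hanorm : ‖a‖ = 1 := mem_sphere_zero_iff_norm.1 haS
  by_cases hwa : ⟪w, a⟫_ℝ = 0
  · exact .inr ⟨⟨a, Submodule.mem_orthogonal_singleton_iff_inner_right.2 hwa⟩,
      by simpa using hanorm, rfl⟩
  set c : ℝ := ⟪w, w⟫_ℝ / ⟪w, a⟫_ℝ with hc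
  have hc0 : c ≠ 0 := div_ne_zero (inner_self_ne_zero.2 hw) hwa
  have hmem : c • a - w ∈ (ℝ ∙ w)ᗮ := by
    rw [Submodule.mem_orthogonal_singleton_iff_inner_right, inner_sub_right,
      real_inner_smul_right, hc, div_mul_cancel₀ _ hwa, sub_self]
  have himage : normalize (c • a) ∈ gnomonic w '' {y | w + (y : E) ∈ Z} :=
    ⟨⟨c • a - w, hmem⟩, by simpa using hZ c a haZ, by simp [gnomonic]⟩
  left
  rcases hc0.lt_or_gt with hneg | hpos
  · rw [normalize_smul_of_neg hneg, normalize_eq_self_of_norm_eq_one hanorm] at himage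
    exact .inr himage
  · rw [normalize_smul_of_pos hpos, normalize_eq_self_of_norm_eq_one hanorm] at himage
    exact .inl himage

variable [FiniteDimensional ℝ E] [MeasurableSpace E] [BorelSpace E]

lemma hausdorffMeasure_cone_inter_sphere_eq_zero {Z : Set E}
    (hZ : ∀ c : ℝ, ∀ x ∈ Z, c • x ∈ Z) {w : E} (hw : w ≠ 0)
    (hnull : μH[finrank ℝ (ℝ ∙ w)ᗮ] {y : (ℝ ∙ w)ᗮ | w + (y : E) ∈ Z} = 0) :
    μH[finrank ℝ (ℝ ∙ w)ᗮ] (Z ∩ Metric.sphere 0 1) = 0 := by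
  have hdim : (0 : ℝ) ≤ finrank ℝ (ℝ ∙ w)ᗮ := Nat.cast_nonneg _
  have himage : μH[finrank ℝ (ℝ ∙ w)ᗮ] (gnomonic w '' {y | w + (y : E) ∈ Z}) = 0 := by
    simpa [hnull] using
      (lipschitzWith_gnomonic hw).hausdorffMeasure_image_le hdim {y | w + (y : E) ∈ Z}
  have hneg : μH[finrank ℝ (ℝ ∙ w)ᗮ] (-(gnomonic w '' {y | w + (y : E) ∈ Z})) = 0 :=
    ((IsometryEquiv.neg E).hausdorffMeasure_preimage _ _).trans himage
  have hequator : μH[finrank ℝ (ℝ ∙ w)ᗮ] (((↑) : (ℝ ∙ w)ᗮ → E) '' Metric.sphere 0 1) = 0 := by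
    rw [isometry_subtype_coe.hausdorffMeasure_image (.inl hdim)]
    exact Measure.addHaar_sphere_of_ne_zero _ _ one_ne_zero
  exact measure_mono_null (cone_inter_sphere_subset_gnomonic_union hZ hw)
    (measure_union_null (measure_union_null himage hneg) hequator)

lemma hausdorffMeasure_zeros_inter_sphere_eq_zero {f : E → F} (hf : AnalyticOnNhd ℝ f Set.univ)
    (hcone : ∀ (c : ℝ) (x : E), f x = 0 → f (c • x) = 0) {w : E} (hw : f w ≠ 0) :
    μH[(finrank ℝ E : ℝ) - 1] ({x | f x = 0} ∩ Metric.sphere 0 1) = 0 := by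
  rcases eq_or_ne w 0 with rfl | hw0
  · have hempty : {x | f x = 0} = ∅ :=
      Set.eq_empty_of_forall_notMem fun x hx => hw (by simpa using hcone 0 x hx)
    simp [hempty]
  have hdim : (finrank ℝ E : ℝ) - 1 = finrank ℝ (ℝ ∙ w)ᗮ := by
    rw [← (ℝ ∙ w).finrank_add_finrank_orthogonal, finrank_span_singleton hw0]
    push_cast
    ring
  rw [hdim]
  refine hausdorffMeasure_cone_inter_sphere_eq_zero hcone hw0 ?_
  have hslice : AnalyticOnNhd ℝ (fun y : (ℝ ∙ w)ᗮ => f (w + y)) Set.univ := fun y _ =>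
    (hf (w + y) trivial).fun_comp_of_eq (g := f)
      (analyticAt_const.add ((ℝ ∙ w)ᗮ.subtypeL.analyticAt y)) rfl
  exact measure_zeros_eq_zero_of_analyticOnNhd _ hslice (w := 0) (by simpa using hw)

end Cone

section Moments

variable {E : Type*} [NormedAddCommGroup E] [InnerProductSpace ℝ E] [MeasurableSpace E]
  {μ : Measure E} {m : ℕ}

lemma integral_inner_pow_eq_of_map_eq [BorelSpace E] {P Q : Measure E} {v : E}
    (h : Q.map (fun x => ⟪v, x⟫_ℝ) = P.map (fun x => ⟪v, x⟫_ℝ)) :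
    ∫ x, ⟪v, x⟫_ℝ ^ m ∂Q = ∫ x, ⟪v, x⟫_ℝ ^ m ∂P := by
  have hpush (ν : Measure E) :
      ∫ x, ⟪v, x⟫_ℝ ^ m ∂ν = ∫ t, t ^ m ∂(ν.map fun x => ⟪v, x⟫_ℝ) := by
    rw [integral_map (by fun_prop) (by fun_prop)]
  rw [hpush, hpush, h]

variable [FiniteDimensional ℝ E]

lemma memLp_id_of_span_eq_top {p : ℝ≥0∞} {S : Set E} (hS : Submodule.span ℝ S = ⊤)
    (h : ∀ u ∈ S, MemLp (fun x => ⟪u, x⟫_ℝ) p μ) : MemLp (fun x : E => x) p μ := by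
  have hinner (v : E) : MemLp (fun x => ⟪v, x⟫_ℝ) p μ := by
    have hv : v ∈ Submodule.span ℝ S := hS ▸ Submodule.mem_top
    induction hv using Submodule.span_induction with
    | mem u hu => exact h u hu
    | zero => simp
    | add x y _ _ hx hy =>
      simp only [inner_add_left]
      exact hx.add hy
    | smul c x _ hx => simpa only [real_inner_smul_left] using hx.const_mul c
  let b := stdOrthonormalBasis ℝ E
  have hsum : MemLp (fun x => ∑ i, ⟪b i, x⟫_ℝ • b i) p μ :=
    memLp_finsetSum _ fun i _ =>
      (hinner (b i)).continuousLinearMap_comp (ContinuousLinearMap.toSpanSingleton ℝ (b i))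
  simpa only [b.sum_repr'] using hsum

variable [BorelSpace E]

lemma integrable_norm_pow_of_span_eq_top (hm : m ≠ 0) {S : Set E}
    (hS : Submodule.span ℝ S = ⊤)
    (h : ∀ u ∈ S, Integrable (fun t => |t| ^ m) (μ.map fun x => ⟪u, x⟫_ℝ)) :
    Integrable (fun x => ‖x‖ ^ m) μ := by
  refine (memLp_id_of_span_eq_top (p := m) hS fun u hu => ?_).integrable_norm_pow hm
  have hu_int := (integrable_map_measure (by fun_prop) (by fun_prop)).1 (h u hu)
  refine (integrable_norm_rpow_iff (by fun_prop) (by exact_mod_cast hm) (by simp)).1 ?_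
  simpa [Function.comp_def] using hu_int

variable (μ m) in
/-- The `m`-th moment tensor `(v₁, …, vₘ) ↦ ∫ ⟪x, v₁⟫ ⋯ ⟪x, vₘ⟫ ∂μ` of `μ`, whose diagonal is the
`m`-th directional moment as a homogeneous polynomial in the direction. It is a Bochner integral
of tensors, hence `0` if the `m`-th absolute moment of `μ` is infinite. -/
noncomputable def momentTensor : E [×m]→L[ℝ] ℝ :=
  ∫ x, (ContinuousMultilinearMap.mkPiAlgebra ℝ (Fin m) ℝ).compContinuousLinearMap
    (fun _ => innerSL ℝ x) ∂μ

lemma momentTensor_apply_diag (h : Integrable (fun x => ‖x‖ ^ m) μ) (v : E) :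
    momentTensor μ m (fun _ => v) = ∫ x, ⟪v, x⟫_ℝ ^ m ∂μ := by
  let prodForm := ContinuousMultilinearMap.mkPiAlgebra ℝ (Fin m) ℝ
  have hcont : Continuous fun x : E => prodForm.compContinuousLinearMap fun _ => innerSL ℝ x :=
    prodForm.compContinuousLinearMapLRight.cont.comp (continuous_pi fun _ => (innerSL ℝ).cont)
  have hint : Integrable (fun x => prodForm.compContinuousLinearMap fun _ => innerSL ℝ x) μ := by
    refine h.mono' hcont.aestronglyMeasurable (ae_of_all _ fun x => ?_)
    calc ‖prodForm.compContinuousLinearMap fun _ => innerSL ℝ x‖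
        ≤ ‖prodForm‖ * ∏ _i : Fin m, ‖innerSL ℝ x‖ :=
          prodForm.norm_compContinuousLinearMap_le _
      _ = ‖x‖ ^ m := by simp [prodForm, ContinuousMultilinearMap.norm_mkPiAlgebra]
  rw [momentTensor, ContinuousMultilinearMap.integral_apply hint]
  simp [prodForm, real_inner_comm]

lemma integral_inner_pow_eq_of_forall_mem {P Q : Measure E}
    (hP : Integrable (fun x => ‖x‖ ^ m) P) (hQ : Integrable (fun x => ‖x‖ ^ m) Q)
    {A : Set E} (hAs : A ⊆ Metric.sphere 0 1) (hApos : 0 < μH[(finrank ℝ E : ℝ) - 1] A)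
    (hA : ∀ u ∈ A, ∫ x, ⟪u, x⟫_ℝ ^ m ∂Q = ∫ x, ⟪u, x⟫_ℝ ^ m ∂P) (v : E) :
    ∫ x, ⟪v, x⟫_ℝ ^ m ∂Q = ∫ x, ⟪v, x⟫_ℝ ^ m ∂P := by
  let T : E [×m]→L[ℝ] ℝ := momentTensor Q m - momentTensor P m
  have hT (w : E) : T (fun _ => w) = ∫ x, ⟪w, x⟫_ℝ ^ m ∂Q - ∫ x, ⟪w, x⟫_ℝ ^ m ∂P := by
    rw [sub_apply, momentTensor_apply_diag hQ, momentTensor_apply_diag hP]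
  have hanalytic : AnalyticOnNhd ℝ (fun w => T fun _ => w) Set.univ := fun w _ =>
    T.analyticAt.fun_comp (g := T) (AnalyticAt.pi fun _ => analyticAt_id)
  have hcone (c : ℝ) (w : E) (hw : T (fun _ => w) = 0) : T (fun _ => c • w) = 0 := by
    rw [T.map_smul_univ (fun _ => c) fun _ => w, hw, smul_zero]
  by_contra hne
  have hv : T (fun _ => v) ≠ 0 := by rwa [hT, sub_ne_zero]
  have hA_zeros : A ⊆ {w | T (fun _ => w) = 0} ∩ Metric.sphere 0 1 := fun a ha =>
    ⟨by rw [Set.mem_ofPred_eq, hT, hA a ha, sub_self], hAs ha⟩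
  exact hApos.ne' (measure_mono_null hA_zeros
    (hausdorffMeasure_zeros_inter_sphere_eq_zero hanalytic hcone hv))

theorem stmt11_general {P Q : Measure E} {A : Set E} (hAs : A ⊆ Metric.sphere 0 1)
    (hApos : 0 < μH[(finrank ℝ E : ℝ) - 1] A)
    (hproj : ∀ u ∈ A, Q.map (fun x => ⟪u, x⟫_ℝ) = P.map (fun x => ⟪u, x⟫_ℝ))
    {S : Set E} (hSA : S ⊆ A) (hS : Submodule.span ℝ S = ⊤) (hm : m ≠ 0)
    (hmom : ∀ u ∈ S, Integrable (fun t => |t| ^ m) (P.map fun x => ⟪u, x⟫_ℝ)) (v : E) :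
    ∫ x, ⟪v, x⟫_ℝ ^ m ∂Q = ∫ x, ⟪v, x⟫_ℝ ^ m ∂P := by
  have hmomQ : ∀ u ∈ S, Integrable (fun t => |t| ^ m) (Q.map fun x => ⟪u, x⟫_ℝ) :=
    fun u hu => hproj u (hSA hu) ▸ hmom u hu
  exact integral_inner_pow_eq_of_forall_mem (integrable_norm_pow_of_span_eq_top hm hS hmom)
    (integrable_norm_pow_of_span_eq_top hm hS hmomQ) hAs hApos
    (fun u hu => integral_inner_pow_eq_of_map_eq (hproj u hu)) v

end Moments

theorem stmt11 (d : ℕ) (P Q : Measure (EuclideanSpace ℝ (Fin d)))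
    [IsProbabilityMeasure P] [IsProbabilityMeasure Q]
    (A : Set (EuclideanSpace ℝ (Fin d))) (hA : MeasurableSet A)
    (hAs : A ⊆ Metric.sphere (0 : EuclideanSpace ℝ (Fin d)) 1)
    (hApos : 0 < μH[(d : ℝ) - 1] A)
    (hproj : ∀ u ∈ A, Q.map (fun x => ⟪u, x⟫_ℝ) = P.map (fun x => ⟪u, x⟫_ℝ))
    (u : Fin d → EuclideanSpace ℝ (Fin d)) (huA : ∀ j, u j ∈ A)
    (hu : LinearIndependent ℝ u)
    (hmom : ∀ j, ∀ m : ℕ,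
      Integrable (fun t => |t| ^ m) (P.map (fun x => ⟪u j, x⟫_ℝ))) :
    ∀ (m : ℕ), 1 ≤ m → ∀ v : EuclideanSpace ℝ (Fin d),
      (∫ x, ⟪v, x⟫_ℝ ^ m ∂Q) = ∫ x, ⟪v, x⟫_ℝ ^ m ∂P := by
  intro m hm v
  exact stmt11_general hAs (by simpa using hApos) hproj (Set.range_subset_iff.2 huA)
    (hu.span_eq_top_of_card_eq_finrank' (by simp)) (by lia) (Set.forall_mem_range.2 (hmom · m)) v
end

section
/- (Sequential Cramér–Wold with positive-measure directions) Let (P_n) and P be Borel probability measures on ℝ^d (d ≥ 2). Suppose there exist a Borel set A ⊂ 𝕊^{d-1} with σ(A) > 0 and linearly independent vectors u_1,…,u_d ∈ A such that: (H1) for every u ∈ A, π_u(P_n) converges weakly to π_u(P); (H2) for each j, π_{u_j}(P) has finite moments of all orders and satisfies Carleman's condition. Then P_n converges weakly to P. -/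
/-!
The projections of `Pn` on the spanning directions `u j` are tight, hence so is `Pn`, and by
Prokhorov's theorem it is enough to show that a cluster point `Q` of `Pn` equals `P`. The
projections of `P` and `Q` on every direction in `A` agree. For each `m`, the difference of
`∫ ⟪v, x⟫ ^ m dP` and `∫ ⟪v, x⟫ ^ m dQ` is a homogeneous polynomial in `v` that vanishes on `A`. The
zero set of a nonzero homogeneous polynomial meets the sphere in a null set, so this polynomial is
zero and all mixed moments of `P` and `Q` agree.

Multivariate moments are then upgraded to characteristic functions one direction at a time. If the
integrals of `⟪u k, x⟫ ^ n * G x` against `P` and `Q` agree for all `n`, then all derivatives at `0`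
of the difference of the Fourier transforms `t ↦ ∫ exp (i t ⟪u k, x⟫) G x` vanish. By the
Cauchy–Schwarz inequality the `n`-th derivative is bounded by a multiple of
`M n = (∫ ⟪u k, x⟫ ^ (2 * n) dP) ^ (1 / 2)`. Carleman's condition is `∑ M n ^ (-1 / n) = ∞`, which
by Carleman's inequality gives `∑ M n / M (n + 1) = ∞`, and the Denjoy–Carleman theorem, in Bang's
version, shows that the difference is zero.
-/

open MeasureTheory Filter
open scoped InnerProductSpace ENNReal Topology BigOperators

section Quasianalyticity

variable {E : Type*} [NormedAddCommGroup E] [NormedSpace ℝ E] {f : ℕ → ℝ → E} {M : ℕ → ℝ}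

/-- The Denjoy–Carleman class of the weight sequence `M`, for a function given together with all its
derivatives: `f n` is the `n`-th derivative of `f 0`, and it is bounded by `M n`. -/
structure DenjoyCarlemanClass (M : ℕ → ℝ) (f : ℕ → ℝ → E) : Prop where
  hasDerivAt : ∀ n x, HasDerivAt (f n) (f (n + 1) x) x
  norm_le : ∀ n x, ‖f n x‖ ≤ M n

/-- The bounds from Bang's proof of the Denjoy–Carleman theorem: `N` is at most the Bang degree of
`f 0` at `x`. They express that the derivatives of `f 0` of low order are small at `x`. -/
def BangBound (M : ℕ → ℝ) (f : ℕ → ℝ → E) (N : ℕ) (x : ℝ) : Prop :=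
  ∀ n ≤ N, ‖f n x‖ ≤ Real.exp (n - N) * M n

lemma succ_le_ratio_mul_of_logConvex (hM : ∀ n, 0 < M n)
    (hlog : ∀ n, M (n + 1) * M (n + 1) ≤ M n * M (n + 2)) {n N : ℕ} (hn : n ≤ N) :
    M (n + 1) ≤ M (N + 1) / M N * M n := by
  have hmono : Monotone fun k ↦ M (k + 1) / M k := by
    refine monotone_nat_of_le_succ fun k ↦ ?_
    rw [div_le_div_iff₀ (hM k) (hM (k + 1))]
    linarith [hlog k]
  exact (div_le_iff₀ (hM n)).1 (hmono hn)

lemma DenjoyCarlemanClass.comp_neg (hf : DenjoyCarlemanClass M f) :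
    DenjoyCarlemanClass M fun n x ↦ (-1 : ℝ) ^ n • f n (-x) where
  hasDerivAt n x := by
    have h := ((hf.hasDerivAt n (-x)).scomp x (hasDerivAt_neg x)).const_smul ((-1 : ℝ) ^ n)
    rwa [smul_smul, ← pow_succ] at h
  norm_le n x := by simpa [norm_smul] using hf.norm_le n (-x)

/-- Descending induction on `n`: the bound for `f (n + 1)` is the derivative of the bound for
`f n`. -/
lemma DenjoyCarlemanClass.norm_add_le (hf : DenjoyCarlemanClass M f) (hM : ∀ n, 0 < M n)
    (hlog : ∀ n, M (n + 1) * M (n + 1) ≤ M n * M (n + 2)) {N : ℕ} {x h : ℝ}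
    (hx : BangBound M f (N + 1) x) {n : ℕ} (hn : n ≤ N + 1) :
    ∀ s ∈ Set.Icc 0 h, ‖f n (x + s)‖ ≤
      Real.exp (n - (N + 1 : ℕ)) * M n * Real.exp (Real.exp 1 * (M (N + 1) / M N) * s) := by
  set r := M (N + 1) / M N
  have hr : 0 < r := div_pos (hM _) (hM _)
  induction hn using Nat.decreasingInduction with
  | self =>
    intro s hs
    have hexp : 1 ≤ Real.exp (Real.exp 1 * r * s) :=
      Real.one_le_exp (mul_nonneg (by positivity) hs.1)
    rw [sub_self, Real.exp_zero, one_mul]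
    exact (hf.norm_le _ _).trans (le_mul_of_one_le_right (hM _).le hexp)
  | of_succ n hn ih =>
    intro s hs
    set c := Real.exp (n - (N + 1 : ℕ)) * M n
    have hderiv (t : ℝ) : HasDerivAt (fun t ↦ f n (x + t)) (f (n + 1) (x + t)) t := by
      simpa using (hf.hasDerivAt n (x + t)).comp_const_add x t
    have hbound (t : ℝ) : HasDerivAt (fun t ↦ c * Real.exp (Real.exp 1 * r * t))
        (c * (Real.exp (Real.exp 1 * r * t) * (Real.exp 1 * r))) t := by
      simpa using (((hasDerivAt_id t).const_mul (Real.exp 1 * r)).exp).const_mul c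
    refine image_norm_le_of_norm_deriv_right_le_deriv_boundary
      (fun t _ ↦ (hderiv t).continuousAt.continuousWithinAt)
      (fun t _ ↦ (hderiv t).hasDerivWithinAt) (by simpa [c] using hx n hn.le) hbound
      (fun t ht ↦ (ih t ⟨ht.1, ht.2.le⟩).trans ?_) hs
    have hratio : M (n + 1) ≤ r * M n := succ_le_ratio_mul_of_logConvex hM hlog (by omega)
    have hexp : Real.exp ((n + 1 : ℕ) - (N + 1 : ℕ)) =
        Real.exp 1 * Real.exp (n - (N + 1 : ℕ)) := by
      rw [← Real.exp_add]
      push_cast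
      ring_nf
    calc _ ≤ Real.exp 1 * Real.exp (n - (N + 1 : ℕ)) * (r * M n)
          * Real.exp (Real.exp 1 * r * t) := by rw [hexp]; gcongr
      _ = _ := by ring

lemma BangBound.add (hf : DenjoyCarlemanClass M f) (hM : ∀ n, 0 < M n)
    (hlog : ∀ n, M (n + 1) * M (n + 1) ≤ M n * M (n + 2)) {N : ℕ} {x h : ℝ}
    (hx : BangBound M f (N + 1) x) (hh : 0 ≤ h)
    (hle : h ≤ Real.exp (-1) * (M N / M (N + 1))) : BangBound M f N (x + h) := by
  intro n hn
  have hstep : Real.exp 1 * (M (N + 1) / M N) * h ≤ 1 := by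
    have hN := hM N
    have hN' := hM (N + 1)
    calc _ ≤ Real.exp 1 * (M (N + 1) / M N) * (Real.exp (-1) * (M N / M (N + 1))) := by gcongr
      _ = 1 := by rw [Real.exp_neg]; field_simp
  have hMn := hM n
  calc ‖f n (x + h)‖
      ≤ Real.exp (n - (N + 1 : ℕ)) * M n * Real.exp (Real.exp 1 * (M (N + 1) / M N) * h) :=
        hf.norm_add_le hM hlog hx (by omega) h ⟨hh, le_rfl⟩
    _ ≤ Real.exp (n - (N + 1 : ℕ)) * M n * Real.exp 1 := by gcongr
    _ = Real.exp (n - N) * M n := by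
        rw [mul_right_comm, ← Real.exp_add]
        push_cast
        ring_nf

lemma bangBound_of_le_sum (hf : DenjoyCarlemanClass M f) (hM : ∀ n, 0 < M n)
    (hlog : ∀ n, M (n + 1) * M (n + 1) ≤ M n * M (n + 2)) (hzero : ∀ n, f n 0 = 0) (N j : ℕ)
    {x : ℝ} (hx : 0 ≤ x)
    (hle : x ≤ ∑ i ∈ Finset.range j, Real.exp (-1) * (M (N + i) / M (N + i + 1))) :
    BangBound M f N x := by
  have hnonneg (n : ℕ) : 0 ≤ Real.exp (-1) * (M n / M (n + 1)) :=
    mul_nonneg (Real.exp_pos _).le (div_nonneg (hM _).le (hM _).le)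
  induction j generalizing N x with
  | zero =>
    obtain rfl : x = 0 := le_antisymm (by simpa using hle) hx
    intro n _
    rw [hzero, norm_zero]
    exact mul_nonneg (Real.exp_pos _).le (hM n).le
  | succ j ih =>
    set δ := Real.exp (-1) * (M N / M (N + 1))
    have hsum : x ≤
        (∑ i ∈ Finset.range j, Real.exp (-1) * (M (N + 1 + i) / M (N + 1 + i + 1))) + δ := by
      rw [Finset.sum_range_succ'] at hle
      simpa only [add_right_comm N 1, add_assoc, add_zero] using hle
    have hprev : BangBound M f (N + 1) (max (x - δ) 0) :=
      ih (N + 1) (le_max_right _ _)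
        (max_le (by linarith) (Finset.sum_nonneg fun i _ ↦ hnonneg (N + 1 + i)))
    have hgap : 0 ≤ x - max (x - δ) 0 :=
      sub_nonneg.2 (max_le (sub_le_self x (hnonneg N)) hx)
    simpa using hprev.add hf hM hlog hgap (by linarith [le_max_left (x - δ) 0])

lemma DenjoyCarlemanClass.eq_zero_of_nonneg (hf : DenjoyCarlemanClass M f) (hM : ∀ n, 0 < M n)
    (hlog : ∀ n, M (n + 1) * M (n + 1) ≤ M n * M (n + 2))
    (hdiv : ¬ Summable fun n ↦ M n / M (n + 1)) (hzero : ∀ n, f n 0 = 0) {x : ℝ} (hx : 0 ≤ x) :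
    f 0 x = 0 := by
  have hbound (N : ℕ) : ‖f 0 x‖ ≤ Real.exp (-N) * M 0 := by
    have htail : ¬ Summable fun i ↦ Real.exp (-1) * (M (N + i) / M (N + i + 1)) := by
      rw [summable_mul_left_iff (Real.exp_pos _).ne']
      simpa only [add_comm N] using (summable_nat_add_iff N).not.2 hdiv
    have hatTop := (not_summable_iff_tendsto_nat_atTop_of_nonneg fun i ↦
      mul_nonneg (Real.exp_pos _).le (div_nonneg (hM (N + i)).le (hM _).le)).1 htail
    obtain ⟨j, hj⟩ := (hatTop.eventually_ge_atTop x).exists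
    simpa using bangBound_of_le_sum hf hM hlog hzero N j hx hj 0 N.zero_le
  have hlim : Tendsto (fun N : ℕ ↦ Real.exp (-N) * M 0) atTop (𝓝 0) := by
    simpa using (Real.tendsto_exp_neg_atTop_nhds_zero.comp
      (tendsto_natCast_atTop_atTop (R := ℝ))).mul_const (M 0)
  exact norm_le_zero_iff.1 (ge_of_tendsto' hlim hbound)

theorem DenjoyCarlemanClass.eq_zero (hf : DenjoyCarlemanClass M f) (hM : ∀ n, 0 < M n)
    (hlog : ∀ n, M (n + 1) * M (n + 1) ≤ M n * M (n + 2))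
    (hdiv : ¬ Summable fun n ↦ M n / M (n + 1)) (hzero : ∀ n, f n 0 = 0) (x : ℝ) :
    f 0 x = 0 := by
  rcases le_total 0 x with hx | hx
  · exact hf.eq_zero_of_nonneg hM hlog hdiv hzero hx
  · simpa using hf.comp_neg.eq_zero_of_nonneg hM hlog hdiv (by simp [hzero])
      (Left.nonneg_neg_iff.2 hx)

end Quasianalyticity

section CarlemanInequality

/-- The weights in Pólya's proof of Carleman's inequality. They are chosen so that the first `n` of
them have product `(n + 1) ^ n`. -/
noncomputable def polyaWeight (i : ℕ) : ℝ := (i + 2) ^ (i + 1) / (i + 1) ^ i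

lemma polyaWeight_pos (i : ℕ) : 0 < polyaWeight i := by
  unfold polyaWeight
  positivity

lemma prod_polyaWeight (n : ℕ) : ∏ i ∈ Finset.range n, polyaWeight i = ((n : ℝ) + 1) ^ n := by
  induction n with
  | zero => simp
  | succ n ih =>
    rw [Finset.prod_range_succ, ih, polyaWeight]
    push_cast
    field_simp
    ring

lemma polyaWeight_div_le (i : ℕ) : polyaWeight i / (i + 1) ≤ Real.exp 1 := by
  calc polyaWeight i / (i + 1) = (1 / (i + 1) + 1) ^ (i + 1) := by
        rw [div_add_one (by positivity), div_pow, polyaWeight]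
        field_simp
        ring
    _ ≤ Real.exp (1 / (i + 1)) ^ (i + 1) := by
        gcongr
        exact Real.add_one_le_exp _
    _ = Real.exp 1 := by
        rw [← Real.exp_nat_mul]
        push_cast
        field_simp

lemma geomMean_le_sum_polyaWeight_mul {a : ℕ → ℝ} (ha : ∀ n, 0 ≤ a n) (n : ℕ) :
    (∏ i ∈ Finset.range (n + 1), a i) ^ (1 / ((n : ℝ) + 1)) ≤
      (∑ i ∈ Finset.range (n + 1), polyaWeight i * a i) / ((n + 1) * (n + 2)) := by
  have hamgm := Real.geom_mean_le_arith_mean (Finset.range (n + 1)) (fun _ ↦ 1)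
    (fun i ↦ polyaWeight i * a i) (by simp) (by
      rw [Finset.sum_const, Finset.card_range, nsmul_one]
      positivity)
    (fun i _ ↦ mul_nonneg (polyaWeight_pos i).le (ha i))
  simp only [Real.rpow_one, Finset.sum_const, Finset.card_range, nsmul_eq_mul, mul_one,
    one_mul] at hamgm
  have hroot : ((((n + 1 : ℕ) : ℝ) + 1) ^ (n + 1)) ^ ((n + 1 : ℕ) : ℝ)⁻¹ = n + 2 := by
    rw [Real.pow_rpow_inv_natCast (by positivity) (by omega)]
    push_cast
    ring
  rw [Finset.prod_mul_distrib, prod_polyaWeight, Real.mul_rpow (by positivity)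
    (Finset.prod_nonneg fun i _ ↦ ha i), hroot] at hamgm
  push_cast at hamgm
  rwa [one_div, div_mul_eq_div_div, le_div_iff₀ (by positivity), mul_comm]

lemma sum_range_sum_div_add (b : ℕ → ℝ) (N : ℕ) :
    ∑ n ∈ Finset.range N, (∑ i ∈ Finset.range (n + 1), b i) / (((n : ℝ) + 1) * (n + 2)) +
      (∑ i ∈ Finset.range N, b i) / (N + 1) = ∑ i ∈ Finset.range N, b i / ((i : ℝ) + 1) := by
  induction N with
  | zero => simp
  | succ N ih =>
    rw [Finset.sum_range_succ, Finset.sum_range_succ (fun i ↦ b i / _), ← ih,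
      Finset.sum_range_succ b]
    push_cast
    field_simp
    ring

theorem summable_geomMean {a : ℕ → ℝ} (ha : ∀ n, 0 ≤ a n) (hsum : Summable a) :
    Summable fun n : ℕ ↦ (∏ i ∈ Finset.range (n + 1), a i) ^ (1 / ((n : ℝ) + 1)) := by
  have hnonneg (i : ℕ) : 0 ≤ polyaWeight i * a i := mul_nonneg (polyaWeight_pos i).le (ha i)
  refine summable_of_sum_range_le (c := ∑' i, Real.exp 1 * a i)
    (fun n ↦ Real.rpow_nonneg (Finset.prod_nonneg fun i _ ↦ ha i) _) fun N ↦ ?_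
  calc _ ≤ ∑ n ∈ Finset.range N,
        (∑ i ∈ Finset.range (n + 1), polyaWeight i * a i) / (((n : ℝ) + 1) * (n + 2)) :=
        Finset.sum_le_sum fun n _ ↦ geomMean_le_sum_polyaWeight_mul ha n
    _ ≤ ∑ i ∈ Finset.range N, polyaWeight i * a i / ((i : ℝ) + 1) := by
        rw [← sum_range_sum_div_add]
        exact le_add_of_nonneg_right
          (div_nonneg (Finset.sum_nonneg fun i _ ↦ hnonneg i) (by positivity))
    _ ≤ ∑ i ∈ Finset.range N, Real.exp 1 * a i := by
        refine Finset.sum_le_sum fun i _ ↦ ?_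
        rw [mul_div_right_comm]
        exact mul_le_mul_of_nonneg_right (polyaWeight_div_le i) (ha i)
    _ ≤ _ := (hsum.mul_left _).sum_le_tsum _ fun i _ ↦ mul_nonneg (Real.exp_pos _).le (ha i)

lemma not_summable_div_succ {M : ℕ → ℝ} (hM : ∀ n, 0 < M n)
    (hdiv : ¬ Summable fun n : ℕ ↦ M (n + 1) ^ (-(1 / ((n : ℝ) + 1)))) :
    ¬ Summable fun n ↦ M n / M (n + 1) := by
  refine fun hsum ↦ hdiv ?_
  have hgeom := summable_geomMean (fun n ↦ div_nonneg (hM n).le (hM (n + 1)).le) hsum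
  have hprod (n : ℕ) : ∏ i ∈ Finset.range n, M i / M (i + 1) = M 0 / M n := by
    induction n with
    | zero => simp [(hM 0).ne']
    | succ n ih => rw [Finset.prod_range_succ, ih, div_mul_div_cancel₀ (hM n).ne']
  simp only [hprod] at hgeom
  refine Summable.of_nonneg_of_le (fun n ↦ Real.rpow_nonneg (hM _).le _) (fun n ↦ ?_)
    (hgeom.mul_left (max 1 (M 0)⁻¹))
  have hexp : 1 / ((n : ℝ) + 1) ≤ 1 := div_le_one_of_le₀ (by simp) (by positivity)
  have hroot : (M 0)⁻¹ ^ (1 / ((n : ℝ) + 1)) ≤ max 1 (M 0)⁻¹ :=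
    calc (M 0)⁻¹ ^ (1 / ((n : ℝ) + 1)) ≤ max 1 (M 0)⁻¹ ^ (1 / ((n : ℝ) + 1)) :=
          Real.rpow_le_rpow (inv_nonneg.2 (hM 0).le) (le_max_right _ _) (by positivity)
      _ ≤ max 1 (M 0)⁻¹ := Real.rpow_le_self_of_one_le (le_max_left _ _) hexp
  calc M (n + 1) ^ (-(1 / ((n : ℝ) + 1)))
      = (M 0)⁻¹ ^ (1 / ((n : ℝ) + 1)) * (M 0 / M (n + 1)) ^ (1 / ((n : ℝ) + 1)) := by
        rw [← Real.mul_rpow (inv_nonneg.2 (hM 0).le) (div_nonneg (hM 0).le (hM _).le),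
          div_eq_mul_inv (M 0), inv_mul_cancel_left₀ (hM 0).ne', Real.rpow_neg (hM _).le,
          Real.inv_rpow (hM _).le]
    _ ≤ _ := mul_le_mul_of_nonneg_right hroot
        (Real.rpow_nonneg (div_nonneg (hM 0).le (hM _).le) _)

end CarlemanInequality

section AllMoments

variable {Ω : Type*} [MeasurableSpace Ω] {μ : Measure Ω} {f g : Ω → ℝ}

/-- The random variable `f` has finite absolute moments of all orders. Asking for membership in
every `L^q`, and not only for integral `q`, makes closure under products immediate from Hölder. -/
def HasAllMoments (f : Ω → ℝ) (μ : Measure Ω) : Prop :=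
  ∀ q : ℝ≥0∞, q ≠ ∞ → MemLp f q μ

lemma hasAllMoments_of_integrable_abs_pow [IsFiniteMeasure μ] (hf : AEStronglyMeasurable f μ)
    (h : ∀ m : ℕ, Integrable (fun x ↦ |f x| ^ m) μ) : HasAllMoments f μ := by
  intro q hq
  obtain ⟨m, hm⟩ := ENNReal.exists_nat_gt hq
  have hm0 : (m : ℝ≥0∞) ≠ 0 := (zero_le.trans_lt hm).ne'
  refine MemLp.mono_exponent ?_ hm.le
  rw [← integrable_norm_rpow_iff hf hm0 (ENNReal.natCast_ne_top m)]
  simpa using h m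

lemma hasAllMoments_const [IsFiniteMeasure μ] (c : ℝ) : HasAllMoments (fun _ : Ω ↦ c) μ :=
  fun _ _ ↦ memLp_const c

lemma HasAllMoments.aestronglyMeasurable (hf : HasAllMoments f μ) : AEStronglyMeasurable f μ :=
  (hf 1 ENNReal.one_ne_top).aestronglyMeasurable

lemma HasAllMoments.aemeasurable (hf : HasAllMoments f μ) : AEMeasurable f μ :=
  hf.aestronglyMeasurable.aemeasurable

lemma HasAllMoments.integrable (hf : HasAllMoments f μ) : Integrable f μ :=
  memLp_one_iff_integrable.1 (hf 1 ENNReal.one_ne_top)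

lemma HasAllMoments.add (hf : HasAllMoments f μ) (hg : HasAllMoments g μ) :
    HasAllMoments (fun x ↦ f x + g x) μ :=
  fun q hq ↦ (hf q hq).add (hg q hq)

lemma HasAllMoments.const_mul (hf : HasAllMoments f μ) (c : ℝ) :
    HasAllMoments (fun x ↦ c * f x) μ :=
  fun q hq ↦ (hf q hq).const_mul c

lemma HasAllMoments.mul (hf : HasAllMoments f μ) (hg : HasAllMoments g μ) :
    HasAllMoments (fun x ↦ f x * g x) μ := by
  intro q hq
  have hq2 : 2 * q ≠ ∞ := ENNReal.mul_ne_top ENNReal.ofNat_ne_top hq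
  have : ENNReal.HolderTriple (2 * q) (2 * q) q := ⟨by
    rw [← two_mul, ENNReal.mul_inv (by simp) (by simp), ← mul_assoc,
      ENNReal.mul_inv_cancel two_ne_zero ENNReal.ofNat_ne_top, one_mul]⟩
  exact (hg (2 * q) hq2).mul (hf (2 * q) hq2)

lemma HasAllMoments.pow [IsFiniteMeasure μ] (hf : HasAllMoments f μ) (n : ℕ) :
    HasAllMoments (fun x ↦ f x ^ n) μ := by
  induction n with
  | zero => simpa using hasAllMoments_const 1
  | succ n ih => simpa only [pow_succ] using ih.mul hf

lemma HasAllMoments.abs (hf : HasAllMoments f μ) : HasAllMoments (fun x ↦ |f x|) μ :=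
  fun q hq ↦ (hf q hq).norm

end AllMoments

section CarlemanStep

variable {Ω : Type*} [MeasurableSpace Ω] {μ ν : Measure Ω} {y : Ω → ℝ} {G : Ω → ℂ}

lemma integral_mul_le_sqrt_mul_sqrt {f g : Ω → ℝ} (hf0 : ∀ x, 0 ≤ f x) (hg0 : ∀ x, 0 ≤ g x)
    (hf : MemLp f 2 μ) (hg : MemLp g 2 μ) :
    ∫ x, f x * g x ∂μ ≤ √(∫ x, f x ^ 2 ∂μ) * √(∫ x, g x ^ 2 ∂μ) := by
  simpa [Real.sqrt_eq_rpow] using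
    integral_mul_le_Lp_mul_Lq_of_nonneg (μ := μ) Real.HolderConjugate.two_two
      (Eventually.of_forall hf0) (Eventually.of_forall hg0) (by simpa using hf) (by simpa using hg)

lemma sqrt_moment_logConvex [IsFiniteMeasure μ] (hy : HasAllMoments y μ) (n : ℕ) :
    √(∫ x, |y x| ^ (2 * (n + 1)) ∂μ) * √(∫ x, |y x| ^ (2 * (n + 1)) ∂μ) ≤
      √(∫ x, |y x| ^ (2 * n) ∂μ) * √(∫ x, |y x| ^ (2 * (n + 2)) ∂μ) := by
  rw [Real.mul_self_sqrt (by positivity)]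
  have h := integral_mul_le_sqrt_mul_sqrt (fun x ↦ pow_nonneg (abs_nonneg (y x)) n)
    (fun x ↦ pow_nonneg (abs_nonneg (y x)) (n + 2))
    (hy.abs.pow n 2 ENNReal.ofNat_ne_top) (hy.abs.pow (n + 2) 2 ENNReal.ofNat_ne_top)
  simp only [← pow_mul, ← pow_add] at h
  rwa [show n + (n + 2) = 2 * (n + 1) by ring, mul_comm n 2, mul_comm (n + 2) 2] at h

lemma carleman_map_iff (hy : AEMeasurable y μ) :
    Carleman (μ.map y) ↔ ¬ Summable fun m : ℕ ↦
      (∫ x, |y x| ^ (2 * (m + 1)) ∂μ) ^ (-(1 / (2 * (m + 1) : ℝ))) := by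
  have hmap (m : ℕ) : ∫ t, |t| ^ (2 * (m + 1)) ∂(μ.map y) = ∫ x, |y x| ^ (2 * (m + 1)) ∂μ :=
    integral_map hy (by fun_prop)
  simp only [Carleman, hmap]

lemma moment_pos_of_carleman [IsFiniteMeasure μ] (hy : HasAllMoments y μ)
    (hcar : Carleman (μ.map y)) (n : ℕ) : 0 < ∫ x, |y x| ^ (2 * n) ∂μ := by
  refine (integral_nonneg fun x ↦ by positivity).lt_of_ne' fun hzero ↦ ?_
  have hy0 : ∀ᵐ x ∂μ, y x = 0 := by
    filter_upwards [(integral_eq_zero_iff_of_nonneg (fun x ↦ by positivity)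
      (hy.abs.pow (2 * n)).integrable).1 hzero] with x hx
    exact abs_eq_zero.1 (eq_zero_of_pow_eq_zero hx)
  have hmoment (m : ℕ) : ∫ x, |y x| ^ (2 * (m + 1)) ∂μ = 0 :=
    integral_eq_zero_of_ae (hy0.mono fun x hx ↦ by simp [hx])
  refine (carleman_map_iff hy.aemeasurable).1 hcar (summable_zero.congr fun m ↦ ?_)
  have hexp : (-(1 / (2 * (m + 1))) : ℝ) ≠ 0 := by
    rw [neg_ne_zero]
    positivity
  rw [hmoment, Real.zero_rpow hexp]

lemma not_summable_sqrt_moment_div_of_carleman [IsFiniteMeasure μ] (hy : HasAllMoments y μ)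
    (hcar : Carleman (μ.map y)) :
    ¬ Summable fun n : ℕ ↦
      √(∫ x, |y x| ^ (2 * n) ∂μ) / √(∫ x, |y x| ^ (2 * (n + 1)) ∂μ) := by
  have hpos := moment_pos_of_carleman hy hcar
  refine not_summable_div_succ (M := fun n ↦ √(∫ x, |y x| ^ (2 * n) ∂μ))
    (fun n ↦ Real.sqrt_pos.2 (hpos n)) ?_
  convert (carleman_map_iff hy.aemeasurable).1 hcar using 3 with n
  rw [Real.sqrt_eq_rpow, ← Real.rpow_mul (hpos (n + 1)).le]
  congr 1
  field_simp

/-- The `n`-th derivative of the Fourier transform `t ↦ ∫ exp (i t y) G dμ` of the density `G` along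
the random variable `y`. -/
noncomputable def fourierDeriv (μ : Measure Ω) (y : Ω → ℝ) (G : Ω → ℂ) (n : ℕ) (t : ℝ) : ℂ :=
  ∫ x, (Complex.I * y x) ^ n * Complex.exp (t * y x * Complex.I) * G x ∂μ

lemma norm_fourierDeriv_integrand {Ω : Type*} (y : Ω → ℝ) (G : Ω → ℂ) (n : ℕ) (t : ℝ) (x : Ω) :
    ‖(Complex.I * y x) ^ n * Complex.exp (t * y x * Complex.I) * G x‖ = |y x| ^ n * ‖G x‖ := by
  have hexp : ‖Complex.exp (t * y x * Complex.I)‖ = 1 := by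
    exact_mod_cast Complex.norm_exp_ofReal_mul_I (t * y x)
  simp [hexp]

lemma HasAllMoments.hasDerivAt_fourierDeriv [IsFiniteMeasure μ] (hy : HasAllMoments y μ)
    (hG : MemLp G 2 μ) (n : ℕ) (t : ℝ) :
    HasDerivAt (fourierDeriv μ y G n) (fourierDeriv μ y G (n + 1) t) t := by
  have hmeas (k : ℕ) (s : ℝ) : AEStronglyMeasurable
      (fun x ↦ (Complex.I * y x) ^ k * Complex.exp (s * y x * Complex.I) * G x) μ :=
    have := hy.aemeasurable
    AEStronglyMeasurable.mul (AEMeasurable.aestronglyMeasurable (by fun_prop)) hG.1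
  have hint (k : ℕ) : Integrable (fun x ↦ |y x| ^ k * ‖G x‖) μ :=
    (hy.abs.pow k 2 ENNReal.ofNat_ne_top).integrable_mul hG.norm
  refine (hasDerivAt_integral_of_dominated_loc_of_deriv_le
    (F := fun (t : ℝ) x ↦ (Complex.I * y x) ^ n * Complex.exp (t * y x * Complex.I) * G x)
    (F' := fun (t : ℝ) x ↦ (Complex.I * y x) ^ (n + 1) * Complex.exp (t * y x * Complex.I) * G x)
    (bound := fun x ↦ |y x| ^ (n + 1) * ‖G x‖) Filter.univ_mem
    (Eventually.of_forall fun t ↦ hmeas n t)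
    ((hint n).mono' (hmeas n t)
      (Eventually.of_forall fun x ↦ (norm_fourierDeriv_integrand y G n t x).le))
    (hmeas (n + 1) t)
    (Eventually.of_forall fun x s _ ↦ (norm_fourierDeriv_integrand y G (n + 1) s x).le)
    (hint (n + 1)) (Eventually.of_forall fun x s _ ↦ ?_)).2
  have hexp : HasDerivAt (fun s : ℝ ↦ Complex.exp (s * y x * Complex.I))
      (Complex.exp (s * y x * Complex.I) * (1 * y x * Complex.I)) s :=
    (((Complex.ofRealCLM.hasDerivAt (x := s)).mul_const (y x : ℂ)).mul_const Complex.I).cexp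
  refine ((hexp.const_mul ((Complex.I * y x) ^ n)).mul_const (G x)).congr_deriv ?_
  ring

lemma HasAllMoments.norm_fourierDeriv_le [IsFiniteMeasure μ] (hy : HasAllMoments y μ)
    (hG : MemLp G 2 μ) (n : ℕ) (t : ℝ) :
    ‖fourierDeriv μ y G n t‖ ≤ √(∫ x, |y x| ^ (2 * n) ∂μ) * √(∫ x, ‖G x‖ ^ 2 ∂μ) := by
  calc ‖fourierDeriv μ y G n t‖ ≤ ∫ x, |y x| ^ n * ‖G x‖ ∂μ := by
        simpa only [fourierDeriv, norm_fourierDeriv_integrand] using norm_integral_le_integral_norm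
          fun x ↦ (Complex.I * y x) ^ n * Complex.exp (t * y x * Complex.I) * G x
    _ ≤ √(∫ x, (|y x| ^ n) ^ 2 ∂μ) * √(∫ x, ‖G x‖ ^ 2 ∂μ) :=
        integral_mul_le_sqrt_mul_sqrt (fun x ↦ by positivity) (fun x ↦ by positivity)
          (hy.abs.pow n 2 ENNReal.ofNat_ne_top) hG.norm
    _ = _ := by simp only [← pow_mul, mul_comm n 2]

/-- The difference of the Fourier transforms of `G` along `y` is quasi-analytic by Carleman's
condition, and all its derivatives vanish at `0`. -/
theorem integral_exp_mul_eq_of_carleman [IsFiniteMeasure μ] [IsFiniteMeasure ν]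
    (hyμ : HasAllMoments y μ) (hyν : HasAllMoments y ν) (hGμ : MemLp G 2 μ) (hGν : MemLp G 2 ν)
    (hmom : ∀ n : ℕ, ∫ x, |y x| ^ (2 * n) ∂μ = ∫ x, |y x| ^ (2 * n) ∂ν)
    (hcar : Carleman (μ.map y))
    (heq : ∀ n : ℕ, ∫ x, (y x : ℂ) ^ n * G x ∂μ = ∫ x, (y x : ℂ) ^ n * G x ∂ν) (t : ℝ) :
    ∫ x, Complex.exp (t * y x * Complex.I) * G x ∂μ =
      ∫ x, Complex.exp (t * y x * Complex.I) * G x ∂ν := by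
  set C := √(∫ x, ‖G x‖ ^ 2 ∂μ) + √(∫ x, ‖G x‖ ^ 2 ∂ν) + 1
  have hC : 0 < C := by positivity
  have hclass : DenjoyCarlemanClass (fun n ↦ C * √(∫ x, |y x| ^ (2 * n) ∂μ))
      fun n t ↦ fourierDeriv μ y G n t - fourierDeriv ν y G n t :=
    { hasDerivAt n t := (hyμ.hasDerivAt_fourierDeriv hGμ n t).sub
        (hyν.hasDerivAt_fourierDeriv hGν n t)
      norm_le n t := by
        have hμ := hyμ.norm_fourierDeriv_le hGμ n t
        have hν := hyν.norm_fourierDeriv_le hGν n t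
        rw [← hmom] at hν
        simp only [C, add_mul]
        linarith [norm_sub_le (fourierDeriv μ y G n t) (fourierDeriv ν y G n t),
          Real.sqrt_nonneg (∫ x, |y x| ^ (2 * n) ∂μ)] }
  have hzero (n : ℕ) : fourierDeriv μ y G n 0 - fourierDeriv ν y G n 0 = 0 := by
    simp only [fourierDeriv, sub_eq_zero, Complex.ofReal_zero, zero_mul, Complex.exp_zero, one_mul,
      mul_pow, mul_assoc, integral_const_mul, heq]
  have hmain := hclass.eq_zero
    (fun n ↦ mul_pos hC (Real.sqrt_pos.2 (moment_pos_of_carleman hyμ hcar n)))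
    (fun n ↦ by
      simpa only [mul_mul_mul_comm C] using
        mul_le_mul_of_nonneg_left (sqrt_moment_logConvex hyμ n) (mul_self_nonneg C))
    (by simpa only [mul_div_mul_left _ _ hC.ne'] using
      not_summable_sqrt_moment_div_of_carleman hyμ hcar) hzero t
  simpa [fourierDeriv, sub_eq_zero] using hmain

end CarlemanStep

section ZariskiDensity

open MvPolynomial

variable {σ K : Type*}

/-- The set `A` of vectors is Zariski dense as a set of directions: no nonzero homogeneous
polynomial vanishes on it. -/
def IsProjectivelyZariskiDense [CommSemiring K] (A : Set (σ → K)) : Prop :=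
  ∀ (p : MvPolynomial σ K) (m : ℕ), p.IsHomogeneous m → (∀ v ∈ A, eval v p = 0) → p = 0

lemma linearCombination_X_pow_eq_sum [Fintype σ] [DecidableEq σ] [CommSemiring K] (v : σ → K)
    (m : ℕ) : (∑ i, v i • (X i : MvPolynomial σ K)) ^ m = ∑ s ∈ Finset.univ.finsuppAntidiag m,
      eval v (monomial s (s.multinomial : K)) • monomial s 1 := by
  ext s
  simp [coeff_linearCombination_X_pow_of_fintype, coeff_sum, coeff_monomial, eval_monomial,
    Finsupp.sum_fintype]

/-- The values `L (⟨v, X⟩ ^ m)` are those of a homogeneous polynomial in `v`, whose coefficients are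
positive multiples of the values of `L` on the monomials of degree `m`. -/
lemma IsProjectivelyZariskiDense.dual_eq_zero [Fintype σ] [Field K] [CharZero K]
    {A : Set (σ → K)} (hA : IsProjectivelyZariskiDense A) (L : Module.Dual K (MvPolynomial σ K))
    (hL : ∀ v ∈ A, ∀ m : ℕ, L ((∑ i, v i • X i) ^ m) = 0) : L = 0 := by
  classical
  ext s
  set m := s.degree
  set p : MvPolynomial σ K := ∑ r ∈ Finset.univ.finsuppAntidiag m,
    L (monomial r 1) • monomial r (r.multinomial : K)
  have hp : p.IsHomogeneous m := by
    refine IsHomogeneous.sum _ _ _ fun r hr ↦ ?_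
    rw [smul_monomial]
    exact isHomogeneous_monomial _ (by simpa [Finsupp.degree_eq_sum] using hr)
  have hp0 : p = 0 := by
    refine hA p m hp fun v hv ↦ ?_
    rw [← hL v hv m, linearCombination_X_pow_eq_sum]
    simp only [p, map_sum, map_smul, smul_eq_mul, smul_eval, mul_comm]
  have hcoeff : L (monomial s 1) * s.multinomial = 0 := by
    have hmem : ∑ i, s i = m := (Finsupp.degree_eq_sum s).symm
    simpa [p, coeff_sum, coeff_monomial, hmem] using congrArg (coeff s) hp0
  have hmult : (s.multinomial : K) ≠ 0 := by
    rw [Finsupp.multinomial_eq]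
    exact_mod_cast (Nat.multinomial_pos _ _).ne'
  exact (mul_eq_zero.1 hcoeff).resolve_right hmult

lemma IsProjectivelyZariskiDense.dual_ext [Fintype σ] [Field K] [CharZero K]
    {A : Set (σ → K)} (hA : IsProjectivelyZariskiDense A) {L L' : Module.Dual K (MvPolynomial σ K)}
    (h : ∀ v ∈ A, ∀ m : ℕ, L ((∑ i, v i • X i) ^ m) = L' ((∑ i, v i • X i) ^ m)) : L = L' :=
  sub_eq_zero.1 <| hA.dual_eq_zero _ fun v hv m ↦ by
    rw [LinearMap.sub_apply, h v hv m, sub_self]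

lemma eval_smul_of_isHomogeneous [CommSemiring K] {p : MvPolynomial σ K} {m : ℕ}
    (hp : p.IsHomogeneous m) (c : K) (x : σ → K) : eval (c • x) p = c ^ m * eval x p := by
  simp only [eval_eq, Finset.mul_sum, Pi.smul_apply, smul_eq_mul, mul_pow, Finset.prod_mul_distrib,
    Finset.prod_pow_eq_pow_sum]
  refine Finset.sum_congr rfl fun s hs ↦ ?_
  rw [← hp.degree_eq_sum_deg_support hs, mul_left_comm]

end ZariskiDensity

section PositiveMeasure

open MvPolynomial NormedSpace

lemma volume_setOf_eval_eq_zero {n : ℕ} {p : MvPolynomial (Fin n) ℝ} (hp : p ≠ 0) :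
    volume {x : Fin n → ℝ | eval x p = 0} = 0 := by
  induction n with
  | zero =>
    obtain ⟨x, hx⟩ : ∃ x, eval x p ≠ 0 := by
      by_contra! h
      exact hp (MvPolynomial.funext fun x ↦ by simpa using h x)
    have hempty : {x : Fin 0 → ℝ | eval x p = 0} = ∅ :=
      Set.eq_empty_of_forall_notMem fun z hz ↦ hx (by rwa [Subsingleton.elim x z])
    rw [hempty, measure_empty]
  | succ n ih =>
    have hmeas : MeasurableSet {x : Fin (n + 1) → ℝ | eval x p = 0} :=
      (isClosed_eq (continuous_eval p) continuous_const).measurableSet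
    have hsplit := (volume_preserving_piFinSuccAbove (fun _ : Fin (n + 1) ↦ ℝ) 0).symm.comp
      (Measure.measurePreserving_swap (μ := (volume : Measure (Fin n → ℝ))) (ν := volume))
    rw [← hsplit.measure_preimage hmeas.nullMeasurableSet,
      Measure.measure_prod_null (hsplit.measurable hmeas)]
    obtain ⟨k, hk⟩ : ∃ k, (finSuccEquiv ℝ n p).coeff k ≠ 0 := by
      by_contra! h
      exact hp ((finSuccEquiv ℝ n).injective (by ext1 k; simpa using h k))
    have hae : ∀ᵐ s : Fin n → ℝ, eval s ((finSuccEquiv ℝ n p).coeff k) ≠ 0 := by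
      rw [ae_iff]
      simpa using ih hk
    filter_upwards [hae] with s hs
    have hne : (finSuccEquiv ℝ n p).map (eval s) ≠ 0 := fun h ↦
      hs (by simpa [Polynomial.coeff_map] using congrArg (Polynomial.coeff · k) h)
    refine ((Polynomial.finite_setOfPred_isRoot hne).subset fun t ht ↦ ?_).measure_zero _
    have ht : eval (Fin.cons t s : Fin (n + 1) → ℝ) p = 0 := by
      simpa [MeasurableEquiv.piFinSuccAbove, Fin.consEquiv, Fin.insertNthEquiv] using ht
    rwa [eval_eq_eval_mv_eval'] at ht

lemma volume_setOf_eval_insertNth_eq_zero {n m : ℕ} {p : MvPolynomial (Fin (n + 1)) ℝ}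
    (hp : p ≠ 0) (hhom : p.IsHomogeneous m) (j : Fin (n + 1)) {s : ℝ} (hs : s ≠ 0) :
    volume {y : Fin n → ℝ | eval (j.insertNth s y : Fin (n + 1) → ℝ) p = 0} = 0 := by
  set q : MvPolynomial (Fin n) ℝ :=
    aeval (j.insertNth (C s) X : Fin (n + 1) → MvPolynomial (Fin n) ℝ) p
  have heval (y : Fin n → ℝ) : eval y q = eval (j.insertNth s y : Fin (n + 1) → ℝ) p := by
    simp only [q, ← coe_aeval_eq_eval, RingHom.coe_coe, ← AlgHom.comp_apply, comp_aeval]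
    congr 2
    ext i
    refine j.succAboveCases ?_ (fun i ↦ ?_) i <;> simp
  have hq : q ≠ 0 := by
    intro hq
    have hX : X j * p = 0 := by
      refine MvPolynomial.funext fun x ↦ ?_
      rw [map_mul, eval_X, map_zero, mul_eq_zero, or_iff_not_imp_left]
      intro hx
      have hscale : x = (x j / s) • (j.insertNth s fun i ↦ s * x (j.succAbove i) / x j) := by
        ext i
        refine j.succAboveCases ?_ (fun i ↦ ?_) i
        · simp [hs]
        · simp only [Pi.smul_apply, Fin.insertNth_apply_succAbove, smul_eq_mul]
          field_simp
      rw [hscale, eval_smul_of_isHomogeneous hhom, ← heval, hq, map_zero, mul_zero]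
    exact (mul_eq_zero.1 hX).elim (X_ne_zero j) hp
  simpa only [heval] using volume_setOf_eval_eq_zero hq

lemma lipschitzOnWith_normalize_s12 {V : Type*} [NormedAddCommGroup V] [NormedSpace ℝ V] :
    LipschitzOnWith 2 (normalize : V → V) {x | 1 ≤ ‖x‖} := by
  refine LipschitzOnWith.of_dist_le_mul fun a (ha : 1 ≤ ‖a‖) b (hb : 1 ≤ ‖b‖) ↦ ?_
  have hsplit : ‖a‖ • (normalize a - normalize b) = (a - b) + (‖b‖ - ‖a‖) • normalize b := by
    rw [smul_sub, sub_smul, norm_smul_normalize, norm_smul_normalize]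
    abel
  have hbnorm : ‖normalize b‖ = 1 := norm_normalize_eq_one_iff.2 (norm_pos_iff.1 (by linarith))
  calc dist (normalize a) (normalize b) ≤ ‖a‖ * ‖normalize a - normalize b‖ := by
        rw [dist_eq_norm]
        exact le_mul_of_one_le_left (norm_nonneg _) ha
    _ = ‖(a - b) + (‖b‖ - ‖a‖) • normalize b‖ := by rw [← hsplit, norm_smul, norm_norm]
    _ ≤ ‖a - b‖ + ‖(‖b‖ - ‖a‖) • normalize b‖ := norm_add_le _ _
    _ ≤ ‖a - b‖ + ‖a - b‖ := by
        rw [norm_smul, hbnorm, mul_one, norm_sub_rev a b]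
        gcongr
        exact abs_norm_sub_norm_le b a
    _ = (2 : NNReal) * dist a b := by
        rw [dist_eq_norm]
        push_cast
        ring

/-- The central projection to the unit sphere of the affine hyperplane where the `j`-th coordinate
equals `s`. For `s = 1` and `s = -1` these charts cover the sphere. -/
noncomputable def gnomonicChart {n : ℕ} (s : ℝ) (j : Fin (n + 1)) (y : Fin n → ℝ) :
    EuclideanSpace ℝ (Fin (n + 1)) :=
  normalize (WithLp.toLp 2 (j.insertNth s y))

lemma exists_lipschitzWith_gnomonicChart {n : ℕ} {s : ℝ} (hs : 1 ≤ |s|) (j : Fin (n + 1)) :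
    ∃ K, LipschitzWith K (gnomonicChart s j) := by
  have hinsert : LipschitzWith 1 fun y : Fin n → ℝ ↦ (j.insertNth s y : Fin (n + 1) → ℝ) := by
    refine LipschitzWith.of_dist_le_mul fun x y ↦ ?_
    rw [NNReal.coe_one, one_mul, dist_pi_le_iff dist_nonneg]
    refine fun i ↦ j.succAboveCases ?_ (fun i ↦ ?_) i
    · simp
    · simpa using dist_le_pi_dist x y i
  have haffine := (PiLp.lipschitzWith_toLp 2 fun _ : Fin (n + 1) ↦ ℝ).comp hinsert
  have hnorm (y : Fin n → ℝ) : 1 ≤ ‖WithLp.toLp 2 (j.insertNth s y : Fin (n + 1) → ℝ)‖ := by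
    refine hs.trans ?_
    simpa using PiLp.norm_apply_le (WithLp.toLp 2 (j.insertNth s y : Fin (n + 1) → ℝ)) j
  exact ⟨_, lipschitzOnWith_univ.1
    (lipschitzOnWith_normalize_s12.comp haffine.lipschitzOnWith fun y _ ↦ hnorm y)⟩

lemma exists_gnomonicChart_eq {n : ℕ} {v : EuclideanSpace ℝ (Fin (n + 1))} (hv : ‖v‖ = 1) :
    ∃ (j : Fin (n + 1)) (s : ℝ) (y : Fin n → ℝ), |s| = 1 ∧ gnomonicChart s j y = v ∧
      ∃ c : ℝ, (j.insertNth s y : Fin (n + 1) → ℝ) = c • v.ofLp := by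
  obtain ⟨j, hj⟩ : ∃ j, v j ≠ 0 := by
    by_contra! h
    obtain rfl : v = 0 := PiLp.ext h
    simp at hv
  have hinsert : (j.insertNth (v j / |v j|) fun i ↦ v (j.succAbove i) / |v j|) =
      |v j|⁻¹ • v.ofLp := by
    ext i
    refine j.succAboveCases ?_ (fun i ↦ ?_) i <;> simp [div_eq_inv_mul]
  refine ⟨j, v j / |v j|, _, by simp [abs_div, hj], ?_, _, hinsert⟩
  rw [gnomonicChart, hinsert, WithLp.toLp_smul, normalize_smul_of_pos (by positivity),
    WithLp.toLp_ofLp, normalize_eq_self_of_norm_eq_one hv]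

lemma hausdorffMeasure_eq_zero_of_eval_eq_zero {n m : ℕ} {p : MvPolynomial (Fin (n + 1)) ℝ}
    (hp : p ≠ 0) (hhom : p.IsHomogeneous m) {A : Set (EuclideanSpace ℝ (Fin (n + 1)))}
    (hsphere : A ⊆ Metric.sphere 0 1) (hA : ∀ v ∈ A, eval v.ofLp p = 0) : μH[(n : ℝ)] A = 0 := by
  set Z : ℝ → Fin (n + 1) → Set (Fin n → ℝ) := fun s j ↦
    {y | eval (j.insertNth s y : Fin (n + 1) → ℝ) p = 0}
  have himage (s : ℝ) (hs : |s| = 1) (j : Fin (n + 1)) :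
      μH[(n : ℝ)] (gnomonicChart s j '' Z s j) = 0 := by
    obtain ⟨K, hK⟩ := exists_lipschitzWith_gnomonicChart hs.ge j
    have hvol : (μH[(n : ℝ)] : Measure (Fin n → ℝ)) = volume := by
      simpa using hausdorffMeasure_pi_real (ι := Fin n)
    have hs0 : s ≠ 0 := abs_pos.1 (by simp [hs])
    refine nonpos_iff_eq_zero.1
      ((hK.hausdorffMeasure_image_le n.cast_nonneg (Z s j)).trans_eq ?_)
    rw [hvol, volume_setOf_eval_insertNth_eq_zero hp hhom j hs0, mul_zero]
  have hcover : A ⊆ ⋃ j, gnomonicChart 1 j '' Z 1 j ∪ gnomonicChart (-1) j '' Z (-1) j := by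
    intro v hv
    obtain ⟨j, s, y, hs, hchart, c, hc⟩ := exists_gnomonicChart_eq (by simpa using hsphere hv)
    have hy : y ∈ Z s j := by
      rw [Set.mem_ofPred_eq, hc, eval_smul_of_isHomogeneous hhom, hA v hv, mul_zero]
    refine Set.mem_iUnion.2 ⟨j, ?_⟩
    rcases eq_or_eq_neg_of_abs_eq hs with rfl | rfl
    exacts [Or.inl ⟨y, hy, hchart⟩, Or.inr ⟨y, hy, hchart⟩]
  exact measure_mono_null hcover (measure_iUnion_null fun j ↦
    measure_union_null (himage 1 (by simp) j) (himage (-1) (by simp) j))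

theorem isProjectivelyZariskiDense_of_hausdorffMeasure_pos {d : ℕ}
    {A : Set (EuclideanSpace ℝ (Fin d))} (hsphere : A ⊆ Metric.sphere 0 1)
    (hpos : 0 < μH[(d : ℝ) - 1] A) : IsProjectivelyZariskiDense (WithLp.ofLp '' A) := by
  intro p m hhom hzero
  by_contra hp
  cases d with
  | zero =>
    have hA : A = ∅ := Set.eq_empty_of_forall_notMem fun v hv ↦ by
      simpa [Subsingleton.elim v 0] using hsphere hv
    simp [hA] at hpos
  | succ n =>
    rw [Nat.cast_succ, add_sub_cancel_right] at hpos
    exact hpos.ne' (hausdorffMeasure_eq_zero_of_eval_eq_zero hp hhom hsphere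
      (Set.forall_mem_image.1 hzero))

end PositiveMeasure

section MultivariateMoments

open MvPolynomial

lemma hasAllMoments_inner_of_span_eq_top {κ E : Type*} [NormedAddCommGroup E]
    [InnerProductSpace ℝ E] [MeasurableSpace E] {μ : Measure E} {u : κ → E}
    (hu : Submodule.span ℝ (Set.range u) = ⊤)
    (hmom : ∀ j, HasAllMoments (fun x ↦ ⟪u j, x⟫_ℝ) μ) (v : E) :
    HasAllMoments (fun x ↦ ⟪v, x⟫_ℝ) μ := by
  have hv : v ∈ Submodule.span ℝ (Set.range u) := hu ▸ Submodule.mem_top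
  induction hv using Submodule.span_induction with
  | mem _ hw =>
    obtain ⟨j, rfl⟩ := hw
    exact hmom j
  | zero =>
    simp only [inner_zero_left]
    exact fun _ _ ↦ MemLp.zero'
  | add v w _ _ hv hw => simpa only [inner_add_left] using hv.add hw
  | smul c v _ hv => simpa only [real_inner_smul_left] using hv.const_mul c

variable {ι κ : Type*} [Fintype ι] {μ ν : Measure (EuclideanSpace ℝ ι)}

lemma eval_sum_smul_X (v x : EuclideanSpace ℝ ι) :
    eval x.ofLp (∑ i, v i • (X i : MvPolynomial ι ℝ)) = ⟪v, x⟫_ℝ := by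
  simp [PiLp.inner_apply, smul_eval, mul_comm]

lemma hasAllMoments_eval [IsFiniteMeasure μ]
    (hμ : ∀ v, HasAllMoments (fun x ↦ ⟪v, x⟫_ℝ) μ) (p : MvPolynomial ι ℝ) :
    HasAllMoments (fun x ↦ eval x.ofLp p) μ := by
  classical
  induction p using MvPolynomial.induction_on with
  | C a => simpa only [eval_C] using hasAllMoments_const a
  | add p q hp hq => simpa only [map_add] using hp.add hq
  | mul_X p i hp =>
    have hi : HasAllMoments (fun x ↦ x i) μ := by
      simpa [EuclideanSpace.inner_single_left] using hμ (EuclideanSpace.single i 1)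
    simpa only [map_mul, eval_X] using hp.mul hi

/-- Integration of polynomials against a measure that has all moments, as a linear functional. It
records the mixed moments of `μ`. -/
noncomputable def momentFunctional (μ : Measure (EuclideanSpace ℝ ι)) [IsFiniteMeasure μ]
    (hμ : ∀ v, HasAllMoments (fun x ↦ ⟪v, x⟫_ℝ) μ) : Module.Dual ℝ (MvPolynomial ι ℝ) where
  toFun p := ∫ x, eval x.ofLp p ∂μ
  map_add' p q := by
    simp only [map_add]
    exact integral_add (hasAllMoments_eval hμ p).integrable (hasAllMoments_eval hμ q).integrable
  map_smul' c p := by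
    simp only [smul_eval, integral_const_mul, RingHom.id_apply, smul_eq_mul]

lemma momentFunctional_sum_smul_X_pow [IsFiniteMeasure μ]
    (hμ : ∀ v, HasAllMoments (fun x ↦ ⟪v, x⟫_ℝ) μ) (v : EuclideanSpace ℝ ι) (m : ℕ) :
    momentFunctional μ hμ ((∑ i, v i • X i) ^ m) = ∫ x, ⟪v, x⟫_ℝ ^ m ∂μ := by
  change ∫ x, eval x.ofLp ((∑ i, v i • X i) ^ m) ∂μ = _
  simp only [map_pow, eval_sum_smul_X]

variable [IsFiniteMeasure μ] [IsFiniteMeasure ν]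

lemma momentFunctional_eq_of_map_inner_eq (hμ : ∀ v, HasAllMoments (fun x ↦ ⟪v, x⟫_ℝ) μ)
    (hν : ∀ v, HasAllMoments (fun x ↦ ⟪v, x⟫_ℝ) ν) {A : Set (EuclideanSpace ℝ ι)}
    (hA : IsProjectivelyZariskiDense (WithLp.ofLp '' A))
    (hmap : ∀ v ∈ A, μ.map (fun x ↦ ⟪v, x⟫_ℝ) = ν.map (fun x ↦ ⟪v, x⟫_ℝ)) :
    momentFunctional μ hμ = momentFunctional ν hν := by
  refine hA.dual_ext <| Set.forall_mem_image.2 fun v hv m ↦ ?_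
  have hpow (ρ : Measure (EuclideanSpace ℝ ι)) :
      ∫ x, ⟪v, x⟫_ℝ ^ m ∂ρ = ∫ t, t ^ m ∂ρ.map fun x ↦ ⟪v, x⟫_ℝ :=
    (integral_map (by fun_prop) (continuous_pow m).aestronglyMeasurable).symm
  rw [momentFunctional_sum_smul_X_pow, momentFunctional_sum_smul_X_pow, hpow, hpow, hmap v hv]

lemma memLp_two_eval_mul_exp (hμ : ∀ v, HasAllMoments (fun x ↦ ⟪v, x⟫_ℝ) μ)
    (p : MvPolynomial ι ℝ) {g : EuclideanSpace ℝ ι → ℝ} (hg : Measurable g) :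
    MemLp (fun x ↦ ((eval x.ofLp p : ℝ) : ℂ) * Complex.exp (g x * Complex.I)) 2 μ := by
  have hp := hasAllMoments_eval hμ p 2 ENNReal.ofNat_ne_top
  have hpC : AEStronglyMeasurable (fun x ↦ ((eval x.ofLp p : ℝ) : ℂ)) μ :=
    hp.ofReal.aestronglyMeasurable
  refine hp.congr_norm (hpC.mul (by fun_prop)) ?_
  simp [Complex.norm_exp_ofReal_mul_I]

/-- The polynomial factor is what makes the induction on `s` work: the one-directional step for
`u k` consumes the equality for all multiples of `p` by powers of `⟪u k, x⟫`. -/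
lemma integral_eval_mul_exp_sum_eq (hμ : ∀ v, HasAllMoments (fun x ↦ ⟪v, x⟫_ℝ) μ)
    (hν : ∀ v, HasAllMoments (fun x ↦ ⟪v, x⟫_ℝ) ν)
    (hmoments : momentFunctional μ hμ = momentFunctional ν hν) {u : κ → EuclideanSpace ℝ ι}
    (hcar : ∀ j, Carleman (μ.map fun x ↦ ⟪u j, x⟫_ℝ)) (c : κ → ℝ) (s : Finset κ)
    (p : MvPolynomial ι ℝ) :
    ∫ x, ((eval x.ofLp p : ℝ) : ℂ) *
        Complex.exp ((∑ j ∈ s, c j * ⟪u j, x⟫_ℝ : ℝ) * Complex.I) ∂μ =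
      ∫ x, ((eval x.ofLp p : ℝ) : ℂ) *
        Complex.exp ((∑ j ∈ s, c j * ⟪u j, x⟫_ℝ : ℝ) * Complex.I) ∂ν := by
  classical
  induction s using Finset.induction_on generalizing p with
  | empty =>
    have hp : ∫ x, eval x.ofLp p ∂μ = ∫ x, eval x.ofLp p ∂ν := DFunLike.congr_fun hmoments p
    simp [integral_complex_ofReal, hp]
  | insert k s hk ih =>
    have hexp (x : EuclideanSpace ℝ ι) : ((eval x.ofLp p : ℝ) : ℂ) *
          Complex.exp ((∑ j ∈ insert k s, c j * ⟪u j, x⟫_ℝ : ℝ) * Complex.I) =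
        Complex.exp (c k * ⟪u k, x⟫_ℝ * Complex.I) * (((eval x.ofLp p : ℝ) : ℂ) *
          Complex.exp ((∑ j ∈ s, c j * ⟪u j, x⟫_ℝ : ℝ) * Complex.I)) := by
      rw [Finset.sum_insert hk, Complex.ofReal_add, add_mul, Complex.exp_add, Complex.ofReal_mul]
      ring
    have habs (m : ℕ) : ∫ x, |⟪u k, x⟫_ℝ| ^ (2 * m) ∂μ = ∫ x, |⟪u k, x⟫_ℝ| ^ (2 * m) ∂ν := by
      simp only [(even_two_mul m).pow_abs, ← momentFunctional_sum_smul_X_pow hμ,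
        ← momentFunctional_sum_smul_X_pow hν, hmoments]
    have hmeas : Measurable fun x ↦ ∑ j ∈ s, c j * ⟪u j, x⟫_ℝ := by fun_prop
    simp only [hexp]
    refine integral_exp_mul_eq_of_carleman (hμ (u k)) (hν (u k))
      (memLp_two_eval_mul_exp hμ p hmeas) (memLp_two_eval_mul_exp hν p hmeas)
      habs (hcar k) (fun m ↦ ?_) (c k)
    obtain ⟨q, hq⟩ : ∃ q : MvPolynomial ι ℝ, ∀ x : EuclideanSpace ℝ ι,
        eval x.ofLp q = ⟪u k, x⟫_ℝ ^ m * eval x.ofLp p :=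
      ⟨(∑ i, u k i • X i) ^ m * p, fun x ↦ by rw [map_mul, map_pow, eval_sum_smul_X]⟩
    simpa only [hq, Complex.ofReal_mul, Complex.ofReal_pow, mul_assoc] using ih q

theorem eq_of_momentFunctional_eq_of_carleman (hμ : ∀ v, HasAllMoments (fun x ↦ ⟪v, x⟫_ℝ) μ)
    (hν : ∀ v, HasAllMoments (fun x ↦ ⟪v, x⟫_ℝ) ν)
    (hmoments : momentFunctional μ hμ = momentFunctional ν hν) {u : κ → EuclideanSpace ℝ ι}
    (hu : Submodule.span ℝ (Set.range u) = ⊤)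
    (hcar : ∀ j, Carleman (μ.map fun x ↦ ⟪u j, x⟫_ℝ)) : μ = ν := by
  refine Measure.ext_of_charFun (funext fun w ↦ ?_)
  obtain ⟨c, rfl⟩ : ∃ c : κ →₀ ℝ, c.sum (fun j a ↦ a • u j) = w :=
    Finsupp.mem_span_range_iff_exists_finsupp.1 (hu ▸ Submodule.mem_top)
  have hinner (x : EuclideanSpace ℝ ι) :
      ∑ j ∈ c.support, c j * ⟪u j, x⟫_ℝ = ⟪x, c.sum fun j a ↦ a • u j⟫_ℝ := by
    simp only [Finsupp.sum, inner_sum, real_inner_smul_right, real_inner_comm]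
  simpa only [map_one, Complex.ofReal_one, one_mul, hinner, charFun_apply] using
    integral_eval_mul_exp_sum_eq hμ hν hmoments hcar c c.support 1

lemma hasAllMoments_of_integrable_abs_pow_map {E : Type*} [MeasurableSpace E] {μ : Measure E}
    [IsFiniteMeasure μ] {y : E → ℝ} (hy : AEMeasurable y μ)
    (h : ∀ m : ℕ, Integrable (fun t ↦ |t| ^ m) (μ.map y)) : HasAllMoments y μ :=
  hasAllMoments_of_integrable_abs_pow hy.aestronglyMeasurable fun m ↦ (h m).comp_aemeasurable hy

theorem eq_of_map_inner_eq_of_carleman {A : Set (EuclideanSpace ℝ ι)}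
    (hA : IsProjectivelyZariskiDense (WithLp.ofLp '' A)) {u : κ → EuclideanSpace ℝ ι}
    (huA : ∀ j, u j ∈ A) (hu : Submodule.span ℝ (Set.range u) = ⊤)
    (hmap : ∀ v ∈ A, μ.map (fun x ↦ ⟪v, x⟫_ℝ) = ν.map (fun x ↦ ⟪v, x⟫_ℝ))
    (hint : ∀ j, ∀ m : ℕ, Integrable (fun t ↦ |t| ^ m) (μ.map fun x ↦ ⟪u j, x⟫_ℝ))
    (hcar : ∀ j, Carleman (μ.map fun x ↦ ⟪u j, x⟫_ℝ)) : μ = ν := by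
  have hμ := hasAllMoments_inner_of_span_eq_top hu fun j ↦
    hasAllMoments_of_integrable_abs_pow_map (by fun_prop) (hint j)
  have hν := hasAllMoments_inner_of_span_eq_top hu fun j ↦
    hasAllMoments_of_integrable_abs_pow_map (by fun_prop) (hmap _ (huA j) ▸ hint j)
  exact eq_of_momentFunctional_eq_of_carleman hμ hν
    (momentFunctional_eq_of_map_inner_eq hμ hν hA hmap) hu hcar

end MultivariateMoments

section Tightness

lemma isTightMeasureSet_image_map_add {E F : Type*} [MeasurableSpace E] [TopologicalSpace F]
    [AddCommMonoid F] [ContinuousAdd F] [SecondCountableTopology F] [T2Space F]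
    [MeasurableSpace F] [BorelSpace F] {S : Set (Measure E)} {f g : E → F}
    (hf : Measurable f) (hg : Measurable g) (hSf : IsTightMeasureSet (Measure.map f '' S))
    (hSg : IsTightMeasureSet (Measure.map g '' S)) :
    IsTightMeasureSet (Measure.map (fun x ↦ f x + g x) '' S) := by
  have hprod : IsTightMeasureSet (Measure.map (fun x ↦ (f x, g x)) '' S) := by
    refine .prodMk ?_ ?_
    · simpa only [Set.image_image, Measure.fst_map_prodMk hg] using hSf
    · simpa only [Set.image_image, Measure.snd_map_prodMk hf] using hSg
  simpa only [Set.image_image, Measure.map_map continuous_add.measurable (hf.prodMk hg),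
    Function.comp_def] using hprod.map continuous_add

lemma isTightMeasureSet_image_map_const_mul {E : Type*} [MeasurableSpace E] {S : Set (Measure E)}
    {f : E → ℝ} (hf : Measurable f) (hS : IsTightMeasureSet (Measure.map f '' S)) (c : ℝ) :
    IsTightMeasureSet (Measure.map (fun x ↦ c * f x) '' S) := by
  have hc : Continuous fun t : ℝ ↦ c * t := continuous_const_mul c
  simpa only [Set.image_image, Measure.map_map hc.measurable hf, Function.comp_def] using hS.map hc

lemma isTightMeasureSet_image_map_const {E F : Type*} [MeasurableSpace E] [TopologicalSpace F]
    [MeasurableSpace F] [MeasurableSingletonClass F] (S : Set (Measure E)) (c : F) :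
    IsTightMeasureSet (Measure.map (fun _ ↦ c) '' S) := by
  rw [isTightMeasureSet_iff_exists_isCompact_measure_compl_le]
  refine fun ε _ ↦ ⟨{c}, isCompact_singleton, ?_⟩
  rintro _ ⟨μ, -, rfl⟩
  simp [Measure.map_const]

lemma isTightMeasureSet_of_span_eq_top {κ E : Type*} [NormedAddCommGroup E]
    [InnerProductSpace ℝ E] [FiniteDimensional ℝ E] [MeasurableSpace E] [BorelSpace E]
    {S : Set (Measure E)} {u : κ → E} (hu : Submodule.span ℝ (Set.range u) = ⊤)
    (hS : ∀ j, IsTightMeasureSet (Measure.map (fun x ↦ ⟪u j, x⟫_ℝ) '' S)) :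
    IsTightMeasureSet S := by
  have htight (v : E) : IsTightMeasureSet (Measure.map (fun x ↦ ⟪v, x⟫_ℝ) '' S) := by
    have hv : v ∈ Submodule.span ℝ (Set.range u) := hu ▸ Submodule.mem_top
    induction hv using Submodule.span_induction with
    | mem _ hw =>
      obtain ⟨j, rfl⟩ := hw
      exact hS j
    | zero => simpa only [inner_zero_left] using isTightMeasureSet_image_map_const S 0
    | add v w _ _ hv hw =>
      simpa only [inner_add_left] using
        isTightMeasureSet_image_map_add (by fun_prop) (by fun_prop) hv hw
    | smul c v _ hv =>
      simpa only [real_inner_smul_left] using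
        isTightMeasureSet_image_map_const_mul (by fun_prop) hv c
  refine isTightMeasureSet_of_inner_tendsto ℝ fun v ↦ ?_
  have hv := tendsto_measure_norm_gt_of_isTightMeasureSet (htight v)
  have hmap (r : ℝ) (μ : Measure E) :
      μ.map (fun x ↦ ⟪v, x⟫_ℝ) {t | r < ‖t‖} = μ {x | r < ‖⟪v, x⟫_ℝ‖} :=
    Measure.map_apply (by fun_prop) (measurableSet_lt measurable_const measurable_norm)
  simpa only [iSup_image, hmap] using hv

end Tightness

section Convergence

lemma weakTendsto_toMeasure_iff_tendsto {E : Type*} [MeasurableSpace E] [TopologicalSpace E]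
    [OpensMeasurableSpace E] {μ : ℕ → ProbabilityMeasure E} {ν : ProbabilityMeasure E} :
    WeakTendsto (fun n ↦ (μ n).toMeasure) ν.toMeasure ↔ Tendsto μ atTop (𝓝 ν) :=
  ProbabilityMeasure.tendsto_iff_forall_integral_tendsto.symm

lemma WeakTendsto.isTightMeasureSet_range {E : Type*} [MetricSpace E] [CompleteSpace E]
    [SecondCountableTopology E] [MeasurableSpace E] [BorelSpace E] {μ : ℕ → Measure E}
    {ν : Measure E} (hμ : ∀ n, IsProbabilityMeasure (μ n)) [hν : IsProbabilityMeasure ν]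
    (h : WeakTendsto μ ν) : IsTightMeasureSet (Set.range μ) := by
  have hlim := (weakTendsto_toMeasure_iff_tendsto (μ := fun n ↦ ⟨μ n, hμ n⟩) (ν := ⟨ν, hν⟩)).1 h
  refine (isTightMeasureSet_of_isCompact_closure
    (hlim.isCompact_insert_range.closure_of_subset (Set.subset_insert _ _))).subset ?_
  rintro _ ⟨n, rfl⟩
  exact ⟨⟨μ n, hμ n⟩, ⟨n, rfl⟩, rfl⟩

/-- By Prokhorov's theorem only the uniqueness of cluster points is at stake. -/
lemma weakTendsto_of_isTightMeasureSet_of_map {I E F : Type*} [MetricSpace E]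
    [MeasurableSpace E] [BorelSpace E] [MetricSpace F] [MeasurableSpace F] [BorelSpace F]
    {μ : ℕ → Measure E} {ν : Measure E} (hμ : ∀ n, IsProbabilityMeasure (μ n))
    [hν : IsProbabilityMeasure ν] (htight : IsTightMeasureSet (Set.range μ)) {f : I → E → F}
    (hf : ∀ i, Continuous (f i))
    (hmap : ∀ i, WeakTendsto (fun n ↦ (μ n).map (f i)) (ν.map (f i)))
    (hsep : ∀ ρ : Measure E, IsProbabilityMeasure ρ → (∀ i, ν.map (f i) = ρ.map (f i)) → ν = ρ) :
    WeakTendsto μ ν := by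
  set μ' : ℕ → ProbabilityMeasure E := fun n ↦ ⟨μ n, hμ n⟩
  have hcompact : IsCompact (closure (Set.range μ')) := by
    refine isCompact_closure_of_isTightMeasureSet (htight.subset ?_)
    rintro _ ⟨_, ⟨n, rfl⟩, rfl⟩
    exact ⟨n, rfl⟩
  refine (weakTendsto_toMeasure_iff_tendsto (μ := μ') (ν := ⟨ν, hν⟩)).2
    (hcompact.tendsto_nhds_of_unique_mapClusterPt
      (Eventually.of_forall fun n ↦ subset_closure ⟨n, rfl⟩) fun ρ _ hρ ↦ ?_)
  refine Subtype.ext (hsep ρ ρ.2 fun i ↦ ?_).symm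
  have hlim := (weakTendsto_toMeasure_iff_tendsto (μ := fun n ↦ (μ' n).map (hf i).aemeasurable)
    (ν := ProbabilityMeasure.map ⟨ν, hν⟩ (hf i).aemeasurable)).1 (hmap i)
  have hcluster := hρ.continuousAt_comp (ProbabilityMeasure.continuous_map (hf i)).continuousAt
  have heq := eq_of_nhds_neBot (hcluster.clusterPt.mono hlim)
  exact congrArg ProbabilityMeasure.toMeasure heq.symm

end Convergence

theorem stmt12_general {ι κ : Type*} [Fintype ι] (Pn : ℕ → Measure (EuclideanSpace ℝ ι))
    (P : Measure (EuclideanSpace ℝ ι)) (hPn : ∀ n, IsProbabilityMeasure (Pn n))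
    [IsProbabilityMeasure P] (A : Set (EuclideanSpace ℝ ι))
    (hA : IsProjectivelyZariskiDense (WithLp.ofLp '' A)) (u : κ → EuclideanSpace ℝ ι)
    (huA : ∀ j, u j ∈ A) (hu : Submodule.span ℝ (Set.range u) = ⊤)
    (H1 : ∀ v ∈ A, WeakTendsto (fun n ↦ (Pn n).map (fun x ↦ ⟪v, x⟫_ℝ))
      (P.map (fun x ↦ ⟪v, x⟫_ℝ)))
    (H2 : ∀ j, (∀ m : ℕ, Integrable (fun t ↦ |t| ^ m) (P.map (fun x ↦ ⟪u j, x⟫_ℝ))) ∧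
      Carleman (P.map (fun x ↦ ⟪u j, x⟫_ℝ))) :
    WeakTendsto Pn P := by
  have hmap (ρ : Measure (EuclideanSpace ℝ ι)) [IsProbabilityMeasure ρ]
      (v : EuclideanSpace ℝ ι) : IsProbabilityMeasure (ρ.map fun x ↦ ⟪v, x⟫_ℝ) :=
    Measure.isProbabilityMeasure_map (by fun_prop)
  have htight : IsTightMeasureSet (Set.range Pn) := by
    refine isTightMeasureSet_of_span_eq_top hu fun j ↦ ?_
    rw [← Set.range_comp]
    have := hmap P (u j)
    exact (H1 (u j) (huA j)).isTightMeasureSet_range fun n ↦ hmap (Pn n) (u j)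
  refine weakTendsto_of_isTightMeasureSet_of_map hPn htight
    (f := fun (v : A) x ↦ ⟪(v : EuclideanSpace ℝ ι), x⟫_ℝ) (fun v ↦ by fun_prop)
    (fun v ↦ H1 v v.2) fun Q _ hQ ↦ ?_
  exact eq_of_map_inner_eq_of_carleman hA huA hu (fun v hv ↦ hQ ⟨v, hv⟩)
    (fun j ↦ (H2 j).1) fun j ↦ (H2 j).2

theorem stmt12 (d : ℕ) (hd : 2 ≤ d)
    (Pn : ℕ → Measure (EuclideanSpace ℝ (Fin d)))
    (P : Measure (EuclideanSpace ℝ (Fin d)))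
    (hPn : ∀ n, IsProbabilityMeasure (Pn n)) [IsProbabilityMeasure P]
    (A : Set (EuclideanSpace ℝ (Fin d))) (hA : MeasurableSet A)
    (hAs : A ⊆ Metric.sphere (0 : EuclideanSpace ℝ (Fin d)) 1)
    (hApos : 0 < μH[(d : ℝ) - 1] A)
    (u : Fin d → EuclideanSpace ℝ (Fin d)) (huA : ∀ j, u j ∈ A)
    (hu : LinearIndependent ℝ u)
    (H1 : ∀ v ∈ A, WeakTendsto (fun n => (Pn n).map (fun x => ⟪v, x⟫_ℝ))
      (P.map (fun x => ⟪v, x⟫_ℝ)))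
    (H2 : ∀ j, (∀ m : ℕ,
        Integrable (fun t => |t| ^ m) (P.map (fun x => ⟪u j, x⟫_ℝ))) ∧
      Carleman (P.map (fun x => ⟪u j, x⟫_ℝ))) :
    WeakTendsto Pn P :=
  stmt12_general Pn P hPn A (isProjectivelyZariskiDense_of_hausdorffMeasure_pos hAs hApos)
    u huA (hu.span_eq_top_of_card_eq_finrank' (by simp)) H1 H2
end
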